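/- arXiv:1903.00794 — 10 statements merged into one kernel-verified Lean document; each statement's English description precedes it below -/
import Mathlib

section
/- For every e ∈ ℝⁿ one has h°(σ₁(e)) = h°(e); in particular the tropical Vieta involution σ₁ preserves every level set {e ∈ ℝⁿ : h°(e) = c}, i.e. it preserves the skeleton of each tropical Calabi–Yau hypersurface in the core pencil. -/
/-!
Separating the first coordinate, `h°(e) = min (h₋₁ - e₁, h₀, h₁ + e₁)`, where none of
`h₋₁`, `h₀`, `h₁` involves `e₁`. Replacing `e₁` by `e₁'` with `e₁ + e₁' = h₋₁ - h₁` swaps the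
first and last entries of this minimum and fixes the middle one, so the minimum is unchanged.
Since the relation between `e₁` and `e₁'` is symmetric, one inequality suffices: this is
`iInf_le_iInf_of_add_eq`.

Both `h₋₁` and `h₁` are minima over nonempty finite sets, even when `n = 1`, so they are attained;
`h₀` may be a minimum over the empty set and is therefore never formed.
-/

/-- One half of the Vieta symmetry of a tropical Laurent polynomial in one variable `x`, with terms
`a i + (t i - 1) * x`: if `m` and `p` are the least coefficients of the terms of slope `-1` and `1`,
and `x + y = m - p`, then every term at `y` dominates some term at `x`. -/
theorem iInf_le_iInf_of_add_eq {ι : Type*} [Finite ι] (t : ι → Fin 3) (a : ι → ℝ) {x y m p : ℝ}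
    (hm : IsLeast (a '' {i | t i = 0}) m) (hp : IsLeast (a '' {i | t i = 2}) p)
    (hxy : x + y = m - p) :
    ⨅ i, (a i + ((t i : ℝ) - 1) * x) ≤ ⨅ i, (a i + ((t i : ℝ) - 1) * y) := by
  obtain ⟨⟨i₀, hi₀, rfl⟩, hm⟩ := hm
  obtain ⟨⟨i₂, hi₂, rfl⟩, hp⟩ := hp
  have bdd := (Set.finite_range fun i => a i + ((t i : ℝ) - 1) * x).bddBelow
  have : Nonempty ι := ⟨i₀⟩
  simp only [Set.mem_ofPred_eq] at hi₀ hi₂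
  refine le_ciInf fun i => ?_
  have h : t i = 0 ∨ t i = 1 ∨ t i = 2 := by
    generalize t i = k
    fin_cases k <;> simp
  rcases h with h | h | h
  · have h1 := hm ⟨i, h, rfl⟩
    refine (ciInf_le bdd i₂).trans ?_
    simp only [h, hi₂]
    norm_num
    linarith
  · refine (ciInf_le bdd i).trans ?_
    simp [h]
  · have h1 := hp ⟨i, h, rfl⟩
    refine (ciInf_le bdd i₀).trans ?_
    simp only [h, hi₀]
    norm_num
    linarith

theorem isLeast_image_iInf_subtype {ι : Type*} [Finite ι] (P : ι → Prop) (a : ι → ℝ)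
    (h : ∃ i, P i) : IsLeast (a '' {i | P i}) (⨅ i : {i // P i}, a i.1) := by
  obtain ⟨i, hi⟩ := h
  have : Nonempty {i // P i} := ⟨⟨i, hi⟩⟩
  constructor
  · obtain ⟨k, hk⟩ := exists_eq_ciInf_of_finite (f := fun i : {i // P i} => a i.1)
    exact ⟨k.1, k.2, hk⟩
  · rintro _ ⟨k, hk, rfl⟩
    exact ciInf_le (Set.finite_range fun i : {i // P i} => a i.1).bddBelow ⟨k, hk⟩

/-- The tropical Vieta involution `σ₁` preserves the value of the tropical
polynomial `h°`, hence preserves every level set `{e : h°(e) = c}` (the skeleton of each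
tropical Calabi–Yau hypersurface in the core pencil).

Indices `i ∈ {−1,0,1}ⁿ \ {0}` are encoded as functions `Fin n → Fin 3`, where `Fin 3`
value `k` corresponds to the integer `k − 1 ∈ {−1,0,1}`, and the excluded index
`(0,…,0)` corresponds to the constant function `1`. -/
theorem stmt_0 (n : ℕ) (hn : 0 < n)
    (c : {i : Fin n → Fin 3 // i ≠ fun _ => 1} → ℝ) :
    -- value of an index entry, in {−1,0,1}
    let val : Fin 3 → ℝ := fun k => (k : ℝ) - 1
    -- the tropical polynomial h°
    let hstar : (Fin n → ℝ) → ℝ := fun e =>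
      ⨅ i : {i : Fin n → Fin 3 // i ≠ fun _ => 1},
        c i + ∑ j, val (i.1 j) * e j
    -- h₋₁ : min over indices with i₁ = −1, involving only e₂,…,eₙ
    let hm : (Fin n → ℝ) → ℝ := fun e =>
      ⨅ i : {i : {i : Fin n → Fin 3 // i ≠ fun _ => 1} // i.1 ⟨0, hn⟩ = 0},
        c i.1 + ∑ j ∈ Finset.univ.erase (⟨0, hn⟩ : Fin n), val (i.1.1 j) * e j
    -- h₁ : min over indices with i₁ = 1, involving only e₂,…,eₙ
    let hp : (Fin n → ℝ) → ℝ := fun e =>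
      ⨅ i : {i : {i : Fin n → Fin 3 // i ≠ fun _ => 1} // i.1 ⟨0, hn⟩ = 2},
        c i.1 + ∑ j ∈ Finset.univ.erase (⟨0, hn⟩ : Fin n), val (i.1.1 j) * e j
    -- the tropical Vieta involution σ₁
    let σ₁ : (Fin n → ℝ) → (Fin n → ℝ) := fun e =>
      Function.update e ⟨0, hn⟩ (hm e - hp e - e ⟨0, hn⟩)
    ∀ e : Fin n → ℝ, hstar (σ₁ e) = hstar e := by
  intro val hstar hm hp σ₁ e
  let z : Fin n := ⟨0, hn⟩
  let t : {i : Fin n → Fin 3 // i ≠ fun _ => 1} → Fin 3 := fun i => i.1 z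
  let a : {i : Fin n → Fin 3 // i ≠ fun _ => 1} → ℝ := fun i =>
    c i + ∑ j ∈ Finset.univ.erase z, val (i.1 j) * e j
  -- `h°` along the line through `e` in the first coordinate direction
  have key : ∀ x : ℝ, hstar (Function.update e z x) = ⨅ i, (a i + ((t i : ℝ) - 1) * x) := by
    intro x
    refine iInf_congr fun i => ?_
    have hs : ∑ j ∈ Finset.univ.erase z, val (i.1 j) * Function.update e z x j
        = ∑ j ∈ Finset.univ.erase z, val (i.1 j) * e j :=
      Finset.sum_congr rfl fun j hj => by
        rw [Function.update_of_ne (Finset.ne_of_mem_erase hj)]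
    rw [← Finset.sum_erase_add _ _ (Finset.mem_univ z), hs, Function.update_self, ← add_assoc]
  have hm' : IsLeast (a '' {i | t i = 0}) (hm e) :=
    isLeast_image_iInf_subtype (fun i => t i = 0) a
      ⟨⟨fun _ => 0, fun h => absurd (congrFun h z) (by decide)⟩, rfl⟩
  have hp' : IsLeast (a '' {i | t i = 2}) (hp e) :=
    isLeast_image_iInf_subtype (fun i => t i = 2) a
      ⟨⟨fun _ => 2, fun h => absurd (congrFun h z) (by decide)⟩, rfl⟩
  have h1 : hstar (σ₁ e) = _ := key (hm e - hp e - e z)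
  have h2 := key (e z)
  rw [Function.update_eq_self] at h2
  rw [h1, h2]
  exact le_antisymm (iInf_le_iInf_of_add_eq t a hm' hp' (by ring))
    (iInf_le_iInf_of_add_eq t a hm' hp' (by ring))
end

section
/- If v ∈ ℝ³ satisfies M·v = λ·v for some real λ > 1, then there exists a unique continuous v-homogeneous function G : E → ℝ satisfying G(F(p)) = λ·G(p) for all p ∈ E. -/
/-!
The linear form `G₀ p = ∑ j, p 0 j * v j` is continuous and `v`-homogeneous, and because
`M v = λ v` its defect `D p = λ⁻¹ G₀ (F p) - G₀ p` is invariant under `p ↦ p ⊞ t`. A continuous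
invariant function on `E` factors through the compact image of the quotient map, so it is
bounded (`exists_bound_of_invariant`). Hence, as `λ > 1`, the series
`G = G₀ + ∑ n, λ⁻ⁿ D (Fⁿ p)` converges uniformly, which gives continuity; homogeneity holds
since `F` descends to the quotient, and `G ∘ F = λ G` by telescoping.

For uniqueness, let `G` be any solution. Then `G - G₀` is continuous and invariant, hence bounded,
and `G (Fⁿ p) = λⁿ G p`, so `λ⁻ⁿ G₀ (Fⁿ p)` tends to `G p`. Since `λ⁻ⁿ G₀ (Fⁿ p) - G₀ p` is the
`n`-th partial sum of the series, `G` is the function constructed above.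
-/

/-- A continuous function on `E` invariant under `p ↦ p ⊞ t` is bounded: every point can be
translated to one with vanishing row `0`, and such points of `E` are parametrized by the compact
image of the quotient map. -/
lemma exists_bound_of_invariant
    {E : Set (Fin 2 → Fin 3 → ℝ)}
    (hstab : ∀ p ∈ E, ∀ t : Fin 3 → ℝ, (fun a j => p a j + t j) ∈ E)
    (hcomp : IsCompact ((fun p : Fin 2 → Fin 3 → ℝ => fun j => p 1 j - p 0 j) '' E))
    (D : E → ℝ) (hD : Continuous D)
    (hinv : ∀ (p : E) (t : Fin 3 → ℝ),
      D ⟨fun a j => p.1 a j + t j, hstab p.1 p.2 t⟩ = D p) :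
    ∃ C : ℝ, ∀ p, |D p| ≤ C := by
  set K := (fun p : Fin 2 → Fin 3 → ℝ => fun j => p 1 j - p 0 j) '' E with hK
  have hs : ∀ p ∈ E, (![0, fun j => p 1 j - p 0 j] : Fin 2 → Fin 3 → ℝ)
      = fun a j => p a j + (-(p 0)) j := by
    intro p _
    funext a j
    fin_cases a <;> simp [sub_eq_add_neg]
  have hsE : ∀ w ∈ K, (![0, w] : Fin 2 → Fin 3 → ℝ) ∈ E := by
    rintro w ⟨p, hp, rfl⟩
    have h := hstab p hp (-(p 0))
    rw [← hs p hp] at h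
    exact h
  have hsc : Continuous (fun w : K => D ⟨![0, w.1], hsE w.1 w.2⟩) := by
    refine hD.comp (Continuous.subtype_mk ?_ _)
    refine continuous_pi fun a => ?_
    fin_cases a
    · exact continuous_const
    · exact continuous_subtype_val
  have : CompactSpace K := isCompact_iff_compactSpace.mp hcomp
  obtain ⟨C, hC⟩ := isCompact_univ.exists_bound_of_continuousOn hsc.continuousOn
  refine ⟨C, fun p => ?_⟩
  have h := hC ⟨_, ⟨p.1, p.2, rfl⟩⟩ (Set.mem_univ _)
  rw [Real.norm_eq_abs] at h
  rw [← hinv p (-(p.1 0))]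
  convert h using 4
  exact (hs p.1 p.2).symm

/-- Existence and uniqueness of a continuous `v`-homogeneous potential
`G : E → ℝ` with `G ∘ F = λ·G`, for a lift `F` of an automorphism of the skeleton to the
bundle `E` of 2×3 matrices, homogeneous of degree the 3×3 matrix `M`, when `M·v = λ·v`
with `λ > 1`.  Points of the bundle are functions `Fin 2 → Fin 3 → ℝ`; `p ⊞ t` adds the
vector `t` columnwise. -/
theorem stmt_2
    (E : Set (Fin 2 → Fin 3 → ℝ))
    (hne : E.Nonempty) (hcl : IsClosed E)
    (hstab : ∀ p ∈ E, ∀ t : Fin 3 → ℝ, (fun a j => p a j + t j) ∈ E)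
    (hcomp : IsCompact ((fun p : Fin 2 → Fin 3 → ℝ => fun j => p 1 j - p 0 j) '' E))
    (M : Matrix (Fin 3) (Fin 3) ℝ)
    (F : (Fin 2 → Fin 3 → ℝ) → (Fin 2 → Fin 3 → ℝ))
    (hF : Set.MapsTo F E E) (hFc : ContinuousOn F E)
    (hFhom : ∀ p ∈ E, ∀ t : Fin 3 → ℝ,
      F (fun a j => p a j + t j) = fun a j => F p a j + Matrix.vecMul t M j)
    (v : Fin 3 → ℝ) (lam : ℝ) (hlam : 1 < lam)
    (hv : M.mulVec v = lam • v) :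
    ∃! G : E → ℝ,
      Continuous G ∧
      (∀ (p : E) (t : Fin 3 → ℝ),
        G ⟨fun a j => p.1 a j + t j, hstab p.1 p.2 t⟩ = G p + ∑ j, t j * v j) ∧
      (∀ p : E, G ⟨F p.1, hF p.2⟩ = lam * G p) := by
  have hl0 : lam ≠ 0 := by positivity
  set T : (Fin 3 → ℝ) → E → E := fun t p => ⟨fun a j => p.1 a j + t j, hstab p.1 p.2 t⟩ with hT
  set f : E → E := fun p => ⟨F p.1, hF p.2⟩ with hf
  have hfc : Continuous f := Continuous.subtype_mk (continuousOn_iff_continuous_domRestrict.mp hFc) _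
  have hfT : ∀ t p, f (T t p) = T (Matrix.vecMul t M) (f p) := fun t p =>
    Subtype.ext (hFhom p.1 p.2 t)
  have hMv : ∀ t : Fin 3 → ℝ, ∑ j, Matrix.vecMul t M j * v j = lam * ∑ j, t j * v j := by
    intro t
    have h := Matrix.dotProduct_mulVec t M v
    rw [hv, dotProduct_smul] at h
    exact h.symm
  set G₀ : E → ℝ := fun p => ∑ j, p.1 0 j * v j with hG₀
  have hG₀c : Continuous G₀ :=  by
    refine continuous_finsetSum _ fun j _ => Continuous.mul ?_ continuous_const
    exact (continuous_apply_apply (0 : Fin 2) j).comp continuous_subtype_val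
  have hG₀T : ∀ t p, G₀ (T t p) = G₀ p + ∑ j, t j * v j := by
    intro t p
    simp only [hG₀, hT, add_mul, Finset.sum_add_distrib]
  set D : E → ℝ := fun p => lam⁻¹ * G₀ (f p) - G₀ p with hD
  have hDc : Continuous D := (continuous_const.mul (hG₀c.comp hfc)).sub hG₀c
  have hDT : ∀ t p, D (T t p) = D p := by
    intro t p
    simp only [hD, hfT, hG₀T, hMv]
    field_simp
    ring
  obtain ⟨C, hC⟩ := exists_bound_of_invariant hstab hcomp D hDc (fun p t => hDT t p)
  have hDnT : ∀ (n : ℕ) t p, D (f^[n] (T t p)) = D (f^[n] p) := by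
    intro n
    induction n with
    | zero => exact hDT
    | succ n ih => intro t p; rw [Function.iterate_succ_apply, hfT, ih, Function.iterate_succ_apply]
  have hlam' : |lam⁻¹| < 1 := by
    rw [abs_of_pos (by positivity)]
    exact inv_lt_one_of_one_lt₀ hlam
  have hu : Summable fun n : ℕ => |lam⁻¹| ^ n * C :=
    (summable_geometric_of_lt_one (abs_nonneg _) hlam').mul_right C
  have hbd : ∀ (n : ℕ) p, ‖lam⁻¹ ^ n * D (f^[n] p)‖ ≤ |lam⁻¹| ^ n * C := by
    intro n p
    rw [norm_mul, norm_pow, Real.norm_eq_abs, Real.norm_eq_abs]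
    exact mul_le_mul_of_nonneg_left (hC _) (by positivity)
  have hsum : ∀ p, Summable fun n : ℕ => lam⁻¹ ^ n * D (f^[n] p) := fun p =>
    Summable.of_norm_bounded hu (fun n => hbd n p)
  refine ⟨fun p => G₀ p + ∑' n : ℕ, lam⁻¹ ^ n * D (f^[n] p), ⟨?_, ?_, ?_⟩, ?_⟩
  · exact hG₀c.add (continuous_tsum
      (fun n => continuous_const.mul (hDc.comp (hfc.iterate n))) hu hbd)
  · intro p t
    change G₀ (T t p) + ∑' n : ℕ, lam⁻¹ ^ n * D (f^[n] (T t p)) = _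
    simp only [hDnT, hG₀T]
    ring
  · intro p
    change G₀ (f p) + ∑' n : ℕ, lam⁻¹ ^ n * D (f^[n] (f p)) =
      lam * (G₀ p + ∑' n : ℕ, lam⁻¹ ^ n * D (f^[n] p))
    have h1 : ∀ n : ℕ, lam⁻¹ ^ n * D (f^[n] (f p))
        = lam * (lam⁻¹ ^ (n + 1) * D (f^[n + 1] p)) := by
      intro n
      rw [Function.iterate_succ_apply, pow_succ]
      field_simp
    rw [(hsum p).tsum_eq_zero_add, tsum_congr h1, tsum_mul_left]
    simp only [Function.iterate_zero, id, pow_zero, one_mul]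
    have h2 : lam * D p = G₀ (f p) - lam * G₀ p := by
      simp only [hD]
      field_simp
    linear_combination -h2
  · rintro G ⟨hGc, hGT, hGf⟩
    obtain ⟨B, hB⟩ := exists_bound_of_invariant hstab hcomp (fun p => G p - G₀ p)
      (hGc.sub hG₀c) (fun p t => by
        have h1 := hGT p t
        have h2 := hG₀T t p
        simp only [hT] at h2
        rw [h1, h2]
        ring)
    funext p
    have hGn : ∀ n : ℕ, G (f^[n] p) = lam ^ n * G p := by
      intro n
      induction n with
      | zero => simp
      | succ n ih =>
        rw [Function.iterate_succ_apply']
        have h := hGf (f^[n] p)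
        change G (f (f^[n] p)) = _ at h
        rw [h, ih]
        ring
    -- The partial sums telescope to `λ⁻ⁿ G₀ (Fⁿ p) - G₀ p`, which is within `λ⁻ⁿ B`
    -- of `G p - G₀ p`.
    have htel : ∀ n : ℕ, ∑ k ∈ Finset.range n, lam⁻¹ ^ k * D (f^[k] p)
        = lam⁻¹ ^ n * G₀ (f^[n] p) - G₀ p := by
      intro n
      induction n with
      | zero => simp
      | succ n ih =>
        rw [Finset.sum_range_succ, ih, Function.iterate_succ_apply']
        simp only [hD]
        ring
    have hlim : Filter.Tendsto
        (fun n : ℕ => ∑ k ∈ Finset.range n, lam⁻¹ ^ k * D (f^[k] p)) Filter.atTop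
        (nhds (G p - G₀ p)) := by
      have hz : Filter.Tendsto (fun n : ℕ => |lam⁻¹| ^ n * B) Filter.atTop (nhds 0) := by
        simpa using (tendsto_pow_atTop_nhds_zero_of_lt_one (abs_nonneg _) hlam').mul_const B
      refine tendsto_iff_norm_sub_tendsto_zero.mpr (squeeze_zero (fun n => norm_nonneg _) ?_ hz)
      intro n
      have h3 : ∑ k ∈ Finset.range n, lam⁻¹ ^ k * D (f^[k] p) - (G p - G₀ p)
          = -(lam⁻¹ ^ n * (G (f^[n] p) - G₀ (f^[n] p))) := by
        rw [htel, hGn, mul_sub, ← mul_assoc, ← mul_pow, inv_mul_cancel₀ hl0]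
        ring
      rw [h3, norm_neg, norm_mul, norm_pow, Real.norm_eq_abs, Real.norm_eq_abs]
      exact mul_le_mul_of_nonneg_left (hB _) (by positivity)
    have h4 := tendsto_nhds_unique hlim (hsum p).hasSum.tendsto_sum_nat
    linarith
end

section
/- The subgroup of SL(2,ℤ) consisting of all matrices congruent to the identity matrix modulo 2 is generated by the three matrices −I, [[1,2],[0,1]] and [[1,0],[2,1]]. -/
open scoped MatrixGroups

/-!
The inclusion of the generated subgroup in `Γ(2)` is a check on the generators. The converse is a
Euclidean algorithm on the first column `(a, c)` of a matrix in `Γ(2)`, where `a` is odd and `c` is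
even, so that `|a| ≠ |c|`. Left multiplication by `[[1,2],[0,1]]^{±1}` replaces `a` by `a ± 2c`, and
left multiplication by `[[1,0],[2,1]]^{±1}` replaces `c` by `c ± 2a`. As long as `c ≠ 0`, one of
these four moves strictly decreases `|a| + |c|` (`mem_of_natAbs_le`). When `c = 0` the matrix is
`±[[1,2k],[0,1]]`, which is `±1` times a power of the first unipotent generator.
-/

/-- The descent: a subgroup containing `-1` and the two unipotent generators contains every matrix
with odd diagonal and even off-diagonal entries. The induction is on a bound `n` for the sum of the
absolute values of the first column. -/
lemma mem_of_natAbs_le (H : Subgroup SL(2, ℤ)) (T U : SL(2, ℤ))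
    (hT : T.1 = !![1, 2; 0, 1]) (hU : U.1 = !![1, 0; 2, 1])
    (hneg : -1 ∈ H) (hTH : T ∈ H) (hUH : U ∈ H) (n : ℕ) :
    ∀ g : SL(2, ℤ), (g.1 0 0).natAbs + (g.1 1 0).natAbs ≤ n →
      g.1 0 0 % 2 = 1 → g.1 1 0 % 2 = 0 → g.1 0 1 % 2 = 0 → g.1 1 1 % 2 = 1 → g ∈ H := by
  induction n with
  | zero => intro g h ha; omega
  | succ n ih =>
    intro g h ha hc hb hd
    have hdet : g.1 0 0 * g.1 1 1 - g.1 0 1 * g.1 1 0 = 1 := by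
      rw [← Matrix.det_fin_two]; exact g.2
    have hTi : (T⁻¹).1 = !![1, -2; 0, 1] := by
      rw [Matrix.SpecialLinearGroup.SL2_inv_expl]; simp [hT]; rfl
    have hUi : (U⁻¹).1 = !![1, 0; -2, 1] := by
      rw [Matrix.SpecialLinearGroup.SL2_inv_expl]; simp [hU]; rfl
    have entries (S : SL(2, ℤ)) (i j : Fin 2) :
        (S * g).1 i j = S.1 i 0 * g.1 0 j + S.1 i 1 * g.1 1 j := by
      simp [Matrix.mul_apply, Fin.sum_univ_two]
    by_cases hc0 : g.1 1 0 = 0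
    · have hT2 : T = ModularGroup.T ^ (2 : ℤ) := by
        apply Subtype.ext
        rw [hT, ModularGroup.coe_T_zpow]
      obtain ⟨k, hk⟩ : ∃ k, g.1 0 1 = 2 * k := ⟨g.1 0 1 / 2, by omega⟩
      have hTk (k : ℤ) : (T ^ k).1 = !![1, 2 * k; 0, 1] := by
        rw [hT2, ← zpow_mul, ModularGroup.coe_T_zpow]
      rw [hc0, mul_zero, sub_zero] at hdet
      rcases Int.mul_eq_one_iff_eq_one_or_neg_one.mp hdet with ⟨h1, h2⟩ | ⟨h1, h2⟩
      · have : g = T ^ k := by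
          apply Subtype.ext
          rw [hTk, Matrix.eta_fin_two g.1, h1, h2, hc0, hk]
        exact this ▸ H.zpow_mem hTH k
      · have : g = -1 * T ^ (-k) := by
          apply Subtype.ext
          rw [neg_one_mul]
          change g.1 = -(T ^ (-k)).1
          rw [hTk, Matrix.eta_fin_two g.1, h1, h2, hc0, hk]
          simp
        exact this ▸ H.mul_mem hneg (H.zpow_mem hTH _)
    · have key (S : SL(2, ℤ)) (hS : S ∈ H)
          (h1 : ((S * g).1 0 0).natAbs + ((S * g).1 1 0).natAbs ≤ n)
          (h2 : (S * g).1 0 0 % 2 = 1) (h3 : (S * g).1 1 0 % 2 = 0)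
          (h4 : (S * g).1 0 1 % 2 = 0) (h5 : (S * g).1 1 1 % 2 = 1) : g ∈ H :=
        (H.mul_mem_cancel_left hS).mp (ih _ h1 h2 h3 h4 h5)
      -- The larger of `|a|`, `|c|` is reduced; the move depends on the signs of `a`, `c`.
      by_cases hlt : (g.1 1 0).natAbs < (g.1 0 0).natAbs
      · by_cases hs : 0 < g.1 0 0 ↔ 0 < g.1 1 0
        · apply key T⁻¹ (H.inv_mem hTH) <;> simp only [entries, hTi] <;> simp <;> omega
        · apply key T hTH <;> simp only [entries, hT] <;> simp <;> omega
      · by_cases hs : 0 < g.1 0 0 ↔ 0 < g.1 1 0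
        · apply key U⁻¹ (H.inv_mem hUH) <;> simp only [entries, hUi] <;> simp <;> omega
        · apply key U hUH <;> simp only [entries, hU] <;> simp <;> omega

/-- The subgroup of `SL(2,ℤ)` of matrices congruent to the identity modulo 2
is generated by `−I`, `[[1,2],[0,1]]` and `[[1,0],[2,1]]`. -/
theorem stmt_4 :
    (Subgroup.closure
        ({ -1,
           ⟨!![1, 2; 0, 1], by norm_num [Matrix.det_fin_two_of]⟩,
           ⟨!![1, 0; 2, 1], by norm_num [Matrix.det_fin_two_of]⟩ } :
          Set SL(2, ℤ)) : Set SL(2, ℤ)) =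
      {g : SL(2, ℤ) | ∀ i j : Fin 2,
        ((g.1 i j : ZMod 2)) = ((1 : Matrix (Fin 2) (Fin 2) ℤ) i j : ZMod 2)} := by
  apply Set.Subset.antisymm
  · intro g hg
    have hΓ : g ∈ CongruenceSubgroup.Gamma 2 := by
      refine (Subgroup.closure_le _).mpr ?_ hg
      rintro x (rfl | rfl | rfl) <;> refine CongruenceSubgroup.Gamma_mem.mpr ?_ <;> decide
    rw [CongruenceSubgroup.Gamma_mem] at hΓ
    obtain ⟨h1, h2, h3, h4⟩ := hΓ
    intro i j
    fin_cases i <;> fin_cases j <;> simpa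
  · intro g hg
    have h00 := hg 0 0
    have h01 := hg 0 1
    have h10 := hg 1 0
    have h11 := hg 1 1
    rw [ZMod.intCast_eq_intCast_iff'] at h00 h01 h10 h11
    exact mem_of_natAbs_le _ _ _ rfl rfl (Subgroup.subset_closure (by simp))
      (Subgroup.subset_closure (Or.inr (Or.inl rfl)))
      (Subgroup.subset_closure (Or.inr (Or.inr rfl))) _ g le_rfl
      (by simpa using h00) (by simpa using h10) (by simpa using h01) (by simpa using h11)
end

section
/- For all (a,b) ∈ ℝ² one has C(ι_x(a,b)) = σ_x(C(a,b)), C(ι_y(a,b)) = σ_y(C(a,b)) and C(ι_z(a,b)) = σ_z(C(a,b)); in other words, the map C semiconjugates the linear action of the three involutions ι_x, ι_y, ι_z on the torus ℝ²/ℤ² to the action of the tropical Vieta involutions σ_x, σ_y, σ_z on the tropical Kummer K3 surface. -/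
/-!
Write `c t = 4 * dist(t, ℤ) - 1`. All three semiconjugacies are instances of the addition law
`c (u + v) + c (u - v) = |c u - c v| - |c u + c v|` (`four_dist_add_sub`), combined with the
evenness of `c`: take `(u, v) = (a + b, b)` for `σ_x`, `(a + b, a)` for `σ_y` and `(a, b)`
for `σ_z`.

The addition law is invariant under integer translations of `u` and `v`, so it is enough to know it
for the representatives `r = u - round u` and `q = v - round v` in `[-1/2, 1/2]`. There
`|r ± q| ≤ 1`, where `dist(t, ℤ)` is `min |t| (1 - |t|)`, and the law becomes a piecewise linear
identity.
-/

/-- An integer within `1/2` of `x` realises the distance from `x` to `ℤ`, even in the case of a tie,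
where it may differ from `round x`. -/
lemma abs_sub_round_eq_of_le_half {x : ℝ} (n : ℤ) (h : |x - n| ≤ 1 / 2) :
    |x - round x| = |x - n| := by
  refine le_antisymm (round_le x n) ?_
  by_cases hn : round x = n
  · rw [hn]
  · have h1 : (1 : ℝ) ≤ |(round x : ℝ) - n| := by
      exact_mod_cast Int.one_le_abs (sub_ne_zero.mpr hn)
    have h2 := abs_sub_le (round x : ℝ) x n
    rw [abs_sub_comm (round x : ℝ) x] at h2
    linarith

lemma abs_neg_sub_round (x : ℝ) : |-x - round (-x)| = |x - round x| := by
  have e : |-x - ((-round x : ℤ) : ℝ)| = |x - round x| := by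
    rw [← abs_neg]; congr 1; push_cast; ring
  rw [← e]
  exact abs_sub_round_eq_of_le_half _ (e.trans_le (abs_sub_round x))

lemma abs_sub_round_eq_min_of_le_one {x : ℝ} (n : ℤ) (h : |x - n| ≤ 1) :
    |x - round x| = min |x - n| (1 - |x - n|) := by
  rcases le_total |x - n| (1 / 2) with h1 | h1
  · rw [abs_sub_round_eq_of_le_half n h1, min_eq_left (by linarith)]
  · rw [min_eq_right (by linarith)]
    -- The nearest integer is now the neighbour of `n` on the side of `x`.
    rcases le_total 0 (x - n) with h0 | h0
    · rw [abs_of_nonneg h0] at *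
      have e : |x - ((n + 1 : ℤ) : ℝ)| = 1 - (x - n) := by
        push_cast
        rw [abs_of_nonpos (by linarith)]; ring
      rw [abs_sub_round_eq_of_le_half (n + 1) (by rw [e]; linarith), e]
    · rw [abs_of_nonpos h0] at *
      have e : |x - ((n - 1 : ℤ) : ℝ)| = 1 - -(x - n) := by
        push_cast
        rw [abs_of_nonneg (by linarith)]; ring
      rw [abs_sub_round_eq_of_le_half (n - 1) (by rw [e]; linarith), e]

/-- The addition law `c (u + v) + c (u - v) = |c u - c v| - |c u + c v|` for
`c t = 4 * dist(t, ℤ) - 1`. -/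
lemma four_dist_add_sub (u v : ℝ) :
    (4 * |u + v - round (u + v)| - 1) + (4 * |u - v - round (u - v)| - 1) =
      |(4 * |u - round u| - 1) - (4 * |v - round v| - 1)| -
        |(4 * |u - round u| - 1) + (4 * |v - round v| - 1)| := by
  have hu := abs_sub_round u
  have hv := abs_sub_round v
  have ea : u + v - ((round u + round v : ℤ) : ℝ) = (u - round u) + (v - round v) := by
    push_cast; ring
  have es : u - v - ((round u - round v : ℤ) : ℝ) = (u - round u) - (v - round v) := by
    push_cast; ring
  have ha := abs_sub_round_eq_min_of_le_one (x := u + v) (round u + round v)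
    (by rw [ea]; exact (abs_add_le _ _).trans (by linarith))
  have hs := abs_sub_round_eq_min_of_le_one (x := u - v) (round u - round v)
    (by rw [es]; exact (abs_sub _ _).trans (by linarith))
  rw [ea] at ha
  rw [es] at hs
  rw [ha, hs]
  generalize u - round u = r at *
  generalize v - round v = q at *
  clear ha hs ea es
  -- What remains is a piecewise linear identity on the square `|r|, |q| ≤ 1/2`.
  grind

/-- The map `C(a,b) = (c(a), c(b), c(a+b))`, where `c(a) = 4·dist(a,ℤ) − 1`,
semiconjugates the linear involutions `ι_x, ι_y, ι_z` of the torus to the tropical Vieta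
involutions `σ_x, σ_y, σ_z` of the tropical Kummer K3 surface.  The distance from `a` to
the nearest integer is `|a − round a|`. -/
theorem stmt_5 :
    let c : ℝ → ℝ := fun a => 4 * |a - round a| - 1
    let C : ℝ × ℝ → ℝ × ℝ × ℝ := fun p => (c p.1, c p.2, c (p.1 + p.2))
    let σx : ℝ × ℝ × ℝ → ℝ × ℝ × ℝ := fun q =>
      (-q.1 - |q.2.1 + q.2.2| + |q.2.1 - q.2.2|, q.2.1, q.2.2)
    let σy : ℝ × ℝ × ℝ → ℝ × ℝ × ℝ := fun q =>
      (q.1, -q.2.1 - |q.1 + q.2.2| + |q.1 - q.2.2|, q.2.2)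
    let σz : ℝ × ℝ × ℝ → ℝ × ℝ × ℝ := fun q =>
      (q.1, q.2.1, -q.2.2 - |q.1 + q.2.1| + |q.1 - q.2.1|)
    let ιx : ℝ × ℝ → ℝ × ℝ := fun p => (p.1 + 2 * p.2, -p.2)
    let ιy : ℝ × ℝ → ℝ × ℝ := fun p => (-p.1, 2 * p.1 + p.2)
    let ιz : ℝ × ℝ → ℝ × ℝ := fun p => (-p.1, p.2)
    ∀ p : ℝ × ℝ,
      C (ιx p) = σx (C p) ∧ C (ιy p) = σy (C p) ∧ C (ιz p) = σz (C p) := by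
  intro c C σx σy σz ιx ιy ιz p
  obtain ⟨a, b⟩ := p
  have hneg : ∀ t, c (-t) = c t := fun t => by simp only [c, abs_neg_sub_round]
  have hadd : ∀ u v, c (u + v) + c (u - v) = |c u - c v| - |c u + c v| := four_dist_add_sub
  refine ⟨?_, ?_, ?_⟩
  · have h := hadd (a + b) b
    rw [show a + b + b = a + 2 * b by ring, show a + b - b = a by ring,
      abs_sub_comm, add_comm (c (a + b))] at h
    refine Prod.ext ?_ (Prod.ext (hneg b) ?_)
    · change c (a + 2 * b) = -c a - |c b + c (a + b)| + |c b - c (a + b)|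
      linarith
    · change c (a + 2 * b + -b) = c (a + b)
      congr 1; ring
  · have h := hadd (a + b) a
    rw [show a + b + a = 2 * a + b by ring, show a + b - a = b by ring,
      abs_sub_comm, add_comm (c (a + b))] at h
    refine Prod.ext (hneg a) (Prod.ext ?_ ?_)
    · change c (2 * a + b) = -c b - |c a + c (a + b)| + |c a - c (a + b)|
      linarith
    · change c (-a + (2 * a + b)) = c (a + b)
      congr 1; ring
  · have h := hadd a b
    rw [← hneg (a - b), show -(a - b) = -a + b by ring] at h
    refine Prod.ext (hneg a) (Prod.ext rfl ?_)
    change c (-a + b) = -c (a + b) - |c a + c b| + |c a - c b|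
    linarith
end

section
/- The image of the map C : ℝ² → ℝ³ is exactly the tetrahedron { (x,y,z) ∈ ℝ³ : min( −x+y+z, x−y+z, x+y−z, −x−y−z ) = −1 }; in particular every point C(a,b) satisfies min( −x+y+z, x−y+z, x+y−z, −x−y−z ) = −1. -/
/-! Write `u`, `v`, `w` for the distances of `a`, `b`, `a + b` to `ℤ`. Under the affine substitution
`x = 4u - 1`, `y = 4v - 1`, `z = 4w - 1` the equation of the tetrahedron becomes
`min (v + w - u, u + w - v, u + v - w, 1 - u - v - w) = 0`.

If `s`, `t` are the signed distances of `a`, `b` to their nearest integers, then `w` is `|s + t|` when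
`|s + t| ≤ 1/2` and `1 - |s + t|` otherwise. In the first case `w` is `u + v` or `|u - v|`, according to
the signs of `s` and `t`; in the second case `s`, `t` have the same sign and `u + v + w = 1`.

Conversely, the four inequalities force `u, v, w ∈ [0, 1/2]`, and on the four faces the preimages
`(u, v)` (for `w = u + v` and for `u + v + w = 1`) and `(u, -v)` (for `u = v + w` and for
`v = u + w`) work. The lemma `abs_sub_round_eq` computes all the distances needed. -/

/-- Any integer within `1/2` of `x` realises the distance of `x` to `ℤ`; at half-integers it need not
be `round x`. -/
lemma abs_sub_round_eq (x : ℝ) (k : ℤ) (h : |x - k| ≤ 1 / 2) : |x - round x| = |x - k| := by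
  apply le_antisymm (round_le x k)
  by_cases hk : round x = k
  · rw [hk]
  · have h1 : (1 : ℝ) ≤ |((round x - k : ℤ) : ℝ)| := by
      exact_mod_cast Int.one_le_abs (sub_ne_zero.mpr hk)
    have h2 : |((round x - k : ℤ) : ℝ)| ≤ |x - k| + |x - round x| := by
      have := abs_sub_le (round x : ℝ) x k
      rw [abs_sub_comm (round x : ℝ) x] at this
      push_cast
      linarith
    linarith

/-- The equation of the tetrahedron in the distance coordinates `u`, `v`, `w`. -/
lemma tetrahedron_iff (u v w : ℝ) :
    min (min (-(4 * u - 1) + (4 * v - 1) + (4 * w - 1)) ((4 * u - 1) - (4 * v - 1) + (4 * w - 1)))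
        (min ((4 * u - 1) + (4 * v - 1) - (4 * w - 1))
          (-(4 * u - 1) - (4 * v - 1) - (4 * w - 1))) = -1 ↔
      (u ≤ v + w ∧ v ≤ u + w ∧ w ≤ u + v ∧ u + v + w ≤ 1) ∧
        (u = v + w ∨ v = u + w ∨ w = u + v ∨ u + v + w = 1) := by
  grind

/-- The possible positions of the distances of `a`, `b`, `a + b` to `ℤ`. -/
lemma dist_add_mem (a b : ℝ) {u v w : ℝ} (hu : |a - round a| = u) (hv : |b - round b| = v)
    (hw : |a + b - round (a + b)| = w) :
    (u ≤ v + w ∧ v ≤ u + w ∧ w ≤ u + v ∧ u + v + w ≤ 1) ∧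
      (u = v + w ∨ v = u + w ∨ w = u + v ∨ u + v + w = 1) := by
  have ha := abs_sub_round a
  have hb := abs_sub_round b
  obtain ⟨s, hs⟩ : ∃ s, s = a - round a := ⟨_, rfl⟩
  obtain ⟨t, ht⟩ : ∃ t, t = b - round b := ⟨_, rfl⟩
  rw [← hs] at ha hu
  rw [← ht] at hb hv
  -- the nearest integer to `a + b` is `round a + round b + e` with `e ∈ {0, 1, -1}`
  have key : ∀ e : ℤ, |s + t - e| ≤ 1 / 2 → w = |s + t - e| := by
    intro e he
    have h : a + b - ((round a + round b + e : ℤ) : ℝ) = s + t - e := by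
      push_cast
      rw [hs, ht]
      ring
    rw [← hw, abs_sub_round_eq (a + b) (round a + round b + e) (by rwa [h]), h]
  have k0 := key 0
  have k1 := key 1
  have k2 := key (-1)
  push_cast at k0 k1 k2
  clear key hs ht hw
  rw [abs_le] at ha hb
  rcases le_total (s + t) (1 / 2) with h | h
  · rcases le_total (-(1 / 2)) (s + t) with h' | h'
    · have := k0 (by rw [abs_le]; constructor <;> linarith)
      clear k0 k1 k2
      grind
    · have := k2 (by rw [abs_le]; constructor <;> linarith)
      clear k0 k1 k2
      grind
  · have := k1 (by rw [abs_le]; constructor <;> linarith)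
    clear k0 k1 k2
    grind

/-- Every position allowed by the equation of the tetrahedron is attained. -/
lemma exists_dist_round_eq {u v w : ℝ} (h : u ≤ v + w ∧ v ≤ u + w ∧ w ≤ u + v ∧ u + v + w ≤ 1)
    (h' : u = v + w ∨ v = u + w ∨ w = u + v ∨ u + v + w = 1) :
    ∃ a b : ℝ, |a - round a| = u ∧ |b - round b| = v ∧ |a + b - round (a + b)| = w := by
  obtain ⟨h1, h2, h3, h4⟩ := h
  have key : ∀ (x d : ℝ) (k : ℤ), 0 ≤ d → d ≤ 1 / 2 → (x - k = d ∨ x - k = -d) →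
      |x - round x| = d := by
    intro x d k hd hd' hx
    have hx' : |x - k| = d := by
      rcases hx with hx | hx <;> simp [hx, abs_of_nonneg hd]
    rw [abs_sub_round_eq x k (by rw [hx']; exact hd'), hx']
  have hu := key u u 0 (by linarith) (by linarith) (by simp)
  have hv := key v v 0 (by linarith) (by linarith) (by simp)
  have hv' := key (-v) v 0 (by linarith) (by linarith) (by simp)
  rcases h' with h' | h' | h' | h'
  · refine ⟨u, -v, hu, hv', key _ w 0 (by linarith) (by linarith) (Or.inl ?_)⟩
    push_cast
    linarith
  · refine ⟨u, -v, hu, hv', key _ w 0 (by linarith) (by linarith) (Or.inr ?_)⟩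
    push_cast
    linarith
  · refine ⟨u, v, hu, hv, key _ w 0 (by linarith) (by linarith) (Or.inl ?_)⟩
    push_cast
    linarith
  · refine ⟨u, v, hu, hv, key _ w 1 (by linarith) (by linarith) (Or.inr ?_)⟩
    push_cast
    linarith

/-- The image of `C(a,b) = (c(a), c(b), c(a+b))`, with
`c(a) = 4·dist(a,ℤ) − 1`, is exactly the tetrahedron
`{ (x,y,z) : min(−x+y+z, x−y+z, x+y−z, −x−y−z) = −1 }` (the tropical Kummer K3 surface);
in particular every point `C(a,b)` satisfies this equation. -/
theorem stmt_6 :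
    let c : ℝ → ℝ := fun a => 4 * |a - round a| - 1
    let C : ℝ × ℝ → ℝ × ℝ × ℝ := fun p => (c p.1, c p.2, c (p.1 + p.2))
    let K : Set (ℝ × ℝ × ℝ) := {q : ℝ × ℝ × ℝ |
      min (min (-q.1 + q.2.1 + q.2.2) (q.1 - q.2.1 + q.2.2))
        (min (q.1 + q.2.1 - q.2.2) (-q.1 - q.2.1 - q.2.2)) = -1}
    Set.range C = K ∧ ∀ p : ℝ × ℝ, C p ∈ K := by
  intro c C K
  have hmem : ∀ p : ℝ × ℝ, C p ∈ K := fun p =>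
    (tetrahedron_iff _ _ _).2 (dist_add_mem p.1 p.2 rfl rfl rfl)
  refine ⟨Set.Subset.antisymm (Set.range_subset_iff.2 hmem) ?_, hmem⟩
  rintro ⟨x, y, z⟩ hq
  obtain ⟨u, rfl⟩ : ∃ u, x = 4 * u - 1 := ⟨(x + 1) / 4, by ring⟩
  obtain ⟨v, rfl⟩ : ∃ v, y = 4 * v - 1 := ⟨(y + 1) / 4, by ring⟩
  obtain ⟨w, rfl⟩ : ∃ w, z = 4 * w - 1 := ⟨(z + 1) / 4, by ring⟩
  obtain ⟨h, h'⟩ := (tetrahedron_iff u v w).1 hq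
  obtain ⟨a, b, ha, hb, hab⟩ := exists_dist_round_eq h h'
  exact ⟨(a, b), by simp only [C, c, ha, hb, hab]⟩
end

section
/- If ξ belongs to the cone 𝒞 then the pullback ξ ∘ F also belongs to 𝒞; that is, the transformation F preserves the cone of tropical-positive polynomials. -/
/-!
Nonnegative coefficients make each affine piece `a·X₀ + b·X₁ + c` of `ξ` monotone in both
variables, so substituting the minima `F₀`, `F₁` commutes with taking minima:
`ξ (F X)` is the minimum, over all triples `(k, i, j)`, of the affine function obtained by
plugging the `i`-th piece of `F₀` and the `j`-th piece of `F₁` into the `k`-th piece of `ξ`.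
The coefficients of these composite pieces are again nonnegative.
-/

/-- A function `ξ : ℝ² → ℝ` is a tropical-positive polynomial if it is a minimum of a
nonempty finite family of affine functions `a·X₀ + b·X₁ + c` with `a ≥ 0` and `b ≥ 0`.
These functions form the cone `𝒞`. -/
def TropPos (ξ : ℝ × ℝ → ℝ) : Prop :=
  ∃ (s : Finset ℕ) (hs : s.Nonempty) (a b c : ℕ → ℝ),
    (∀ α ∈ s, 0 ≤ a α ∧ 0 ≤ b α) ∧
    ∀ X : ℝ × ℝ, ξ X = s.inf' hs fun α => a α * X.1 + b α * X.2 + c α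

/-- Membership in the cone from a family indexed by triples of naturals (reindexed by a bijection
`ℕ × ℕ × ℕ ≃ ℕ`), with the minimum expressed as an attained lower bound. -/
lemma TropPos.of_triples (ξ : ℝ × ℝ → ℝ) (s : Finset (ℕ × ℕ × ℕ)) (hs : s.Nonempty)
    (a b c : ℕ × ℕ × ℕ → ℝ) (hab : ∀ t ∈ s, 0 ≤ a t ∧ 0 ≤ b t)
    (hle : ∀ X : ℝ × ℝ, ∀ t ∈ s, ξ X ≤ a t * X.1 + b t * X.2 + c t)
    (hatt : ∀ X : ℝ × ℝ, ∃ t ∈ s, ξ X = a t * X.1 + b t * X.2 + c t) : TropPos ξ := by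
  let e : ℕ × ℕ × ℕ ≃ ℕ := Denumerable.eqv _
  refine ⟨s.map e.toEmbedding, hs.map, a ∘ e.symm, b ∘ e.symm, c ∘ e.symm, ?_, ?_⟩
  · intro n hn
    obtain ⟨t, ht, rfl⟩ := Finset.mem_map.1 hn
    simpa using hab t ht
  · intro X
    apply le_antisymm
    · apply Finset.le_inf'
      intro n hn
      obtain ⟨t, ht, rfl⟩ := Finset.mem_map.1 hn
      simpa using hle X t ht
    · obtain ⟨t, ht, h⟩ := hatt X
      rw [h]
      refine (Finset.inf'_le _ (Finset.mem_map_of_mem e.toEmbedding ht)).trans_eq ?_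
      simp

/-- A transformation `F = (F₀, F₁)` of `ℝ²` whose components are minima of
nonempty finite families of affine functions with nonnegative coefficients preserves the
cone `𝒞` of tropical-positive polynomials: if `ξ ∈ 𝒞` then `ξ ∘ F ∈ 𝒞`. -/
theorem stmt_8 (F₀ F₁ : ℝ × ℝ → ℝ) (h₀ : TropPos F₀) (h₁ : TropPos F₁)
    (ξ : ℝ × ℝ → ℝ) (hξ : TropPos ξ) :
    TropPos (fun X => ξ (F₀ X, F₁ X)) := by
  obtain ⟨s₀, hs₀, a₀, b₀, c₀, hp₀, hF₀⟩ := h₀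
  obtain ⟨s₁, hs₁, a₁, b₁, c₁, hp₁, hF₁⟩ := h₁
  obtain ⟨s, hs, a, b, c, hp, hξ⟩ := hξ
  refine TropPos.of_triples _ (s ×ˢ s₀ ×ˢ s₁) (hs.product (hs₀.product hs₁))
    (fun t => a t.1 * a₀ t.2.1 + b t.1 * a₁ t.2.2)
    (fun t => a t.1 * b₀ t.2.1 + b t.1 * b₁ t.2.2)
    (fun t => a t.1 * c₀ t.2.1 + b t.1 * c₁ t.2.2 + c t.1) ?_ ?_ ?_
  · rintro ⟨k, i, j⟩ ht
    simp only [Finset.mem_product] at ht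
    obtain ⟨hk, hi, hj⟩ := ht
    obtain ⟨ha, hb⟩ := hp k hk
    obtain ⟨ha₀, hb₀⟩ := hp₀ i hi
    obtain ⟨ha₁, hb₁⟩ := hp₁ j hj
    constructor <;> positivity
  · rintro X ⟨k, i, j⟩ ht
    simp only [Finset.mem_product] at ht
    obtain ⟨hk, hi, hj⟩ := ht
    obtain ⟨ha, hb⟩ := hp k hk
    have e₀ : F₀ X ≤ a₀ i * X.1 + b₀ i * X.2 + c₀ i := by
      rw [hF₀]
      exact Finset.inf'_le _ hi
    have e₁ : F₁ X ≤ a₁ j * X.1 + b₁ j * X.2 + c₁ j := by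
      rw [hF₁]
      exact Finset.inf'_le _ hj
    have e : ξ (F₀ X, F₁ X) ≤ a k * F₀ X + b k * F₁ X + c k := by
      rw [hξ]
      exact Finset.inf'_le _ hk
    have m₀ := mul_le_mul_of_nonneg_left e₀ ha
    have m₁ := mul_le_mul_of_nonneg_left e₁ hb
    dsimp only
    linarith
  · intro X
    -- The triple of minimizers: `i`, `j` for the components of `F` at `X`, `k` for `ξ` at `F X`.
    obtain ⟨i, hi, e₀⟩ := Finset.exists_mem_eq_inf' hs₀ fun α => a₀ α * X.1 + b₀ α * X.2 + c₀ α
    obtain ⟨j, hj, e₁⟩ := Finset.exists_mem_eq_inf' hs₁ fun α => a₁ α * X.1 + b₁ α * X.2 + c₁ α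
    obtain ⟨k, hk, e⟩ := Finset.exists_mem_eq_inf' hs fun α => a α * F₀ X + b α * F₁ X + c α
    refine ⟨(k, i, j), by simp [hi, hj, hk], ?_⟩
    rw [← hF₀] at e₀
    rw [← hF₁] at e₁
    rw [← hξ (F₀ X, F₁ X)] at e
    dsimp only
    rw [e, e₀, e₁]
    ring
end

section
/- There exists a unique function G : ℝ² → ℝ which simultaneously: (i) is homogeneous of degree 1, i.e. G(X₀+t, X₁+t) = G(X₀,X₁) + t for all t ∈ ℝ; (ii) is concave, nondecreasing in each variable, and the limits of G(X₀,X₁) − min(X₀,X₁) as X₁−X₀ → +∞ and as X₀−X₁ → +∞ exist and are finite real numbers; (iii) satisfies the functional equation G(F(X₀,X₁)) = n·G(X₀,X₁) for all (X₀,X₁) ∈ ℝ². -/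
/-!
The potential is the escape rate of the iterates of `F`: `G X = lim min (F^k X) / n^k`.

Every term of `F` has weights `a + b = n` and the extreme terms `(n, 0)` and `(0, n)` each occur in
some component, so `min (F X)` differs from `n * min X` by at most a constant `C`
(`exists_bound`). Hence consecutive approximants `min (F^k X) / n^k` differ by at most `C / n^(k+1)`
and converge, with the limit at bounded distance from `min`. Homogeneity, monotonicity and concavity
are inherited from `F` and `min` by the approximants (a monotone concave map composed with a
concave one is concave) and pass to the limit. For a homogeneous monotone `G`, the restriction of
`G - min` to either side of the diagonal is a monotone function of the distance to the diagonal, so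
its limit exists as soon as `G - min` is bounded above.

Conversely, monotonicity and the finite limits force `G - min` to be bounded
(`abs_sub_min_le`). Two solutions thus have a bounded difference `D`, and
`D (F^k X) = n^k * D X` forces `D = 0`.
-/

open Filter

/-- The escape-rate construction for an abstract monotone, concave map `F` of the plane, homogeneous
of degree `n`, for which `min ∘ F - n * min` is bounded. Concavity of `F` refers to the product
order on `ℝ × ℝ`. -/
lemma exists_potential (n : ℕ) (hn : 2 ≤ n) (F : ℝ × ℝ → ℝ × ℝ) (C : ℝ)
    (hhom : ∀ (X : ℝ × ℝ) (t : ℝ),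
      F (X.1 + t, X.2 + t) = ((F X).1 + n * t, (F X).2 + n * t))
    (hmono : Monotone F)
    (hconc : ∀ (x y : ℝ × ℝ) (p q : ℝ), 0 ≤ p → 0 ≤ q → p + q = 1 →
      p • F x + q • F y ≤ F (p • x + q • y))
    (hC : ∀ X : ℝ × ℝ, |min (F X).1 (F X).2 - n * min X.1 X.2| ≤ C) :
    ∃ G : ℝ × ℝ → ℝ,
      (∀ (X : ℝ × ℝ) (t : ℝ), G (X.1 + t, X.2 + t) = G X + t) ∧
      ConcaveOn ℝ Set.univ G ∧ Monotone G ∧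
      (∃ K, ∀ X : ℝ × ℝ, |G X - min X.1 X.2| ≤ K) ∧
      (∀ X : ℝ × ℝ, G (F X) = n * G X) := by
  have hn2 : (2 : ℝ) ≤ n := by exact_mod_cast hn
  have hn0 : (0 : ℝ) < n := by linarith
  set r : ℝ := 1 / n with hr
  have hr1 : r < 1 := by rw [hr, div_lt_one hn0]; linarith
  set f : ℝ × ℝ → ℕ → ℝ := fun X k => min (F^[k] X).1 (F^[k] X).2 / (n : ℝ) ^ k with hf
  have hstep : ∀ X k, dist (f X k) (f X (k + 1)) ≤ C / n * r ^ k := by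
    intro X k
    have h := hC (F^[k] X)
    have e : f X (k + 1) - f X k = (min (F (F^[k] X)).1 (F (F^[k] X)).2
        - n * min (F^[k] X).1 (F^[k] X).2) / (n : ℝ) ^ (k + 1) := by
      simp only [hf, Function.iterate_succ_apply', pow_succ]
      field_simp
    rw [dist_comm, Real.dist_eq, e, abs_div, abs_of_pos (pow_pos hn0 (k + 1)), hr, div_pow, one_pow,
      div_mul_div_comm, mul_one, ← pow_succ']
    gcongr
  have hlim : ∀ X, ∃ L, Tendsto (f X) atTop (nhds L) := fun X =>
    cauchySeq_tendsto_of_complete (cauchySeq_of_le_geometric r _ hr1 (hstep X))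
  choose G hG using hlim
  have hiter_hom : ∀ (k : ℕ) (X : ℝ × ℝ) (t : ℝ),
      F^[k] (X.1 + t, X.2 + t) = ((F^[k] X).1 + n ^ k * t, (F^[k] X).2 + n ^ k * t) := by
    intro k
    induction k with
    | zero => intro X t; simp
    | succ k ih =>
      intro X t
      rw [Function.iterate_succ_apply', ih, hhom, Function.iterate_succ_apply']
      simp only [pow_succ']
      ext <;> simp [mul_assoc]
  have hiter_conc : ∀ (k : ℕ) (x y : ℝ × ℝ) (p q : ℝ), 0 ≤ p → 0 ≤ q → p + q = 1 →
      p • F^[k] x + q • F^[k] y ≤ F^[k] (p • x + q • y) := by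
    intro k
    induction k with
    | zero => intro x y p q _ _ _; simp
    | succ k ih =>
      intro x y p q hp hq hpq
      simp only [Function.iterate_succ_apply']
      exact (hconc _ _ p q hp hq hpq).trans (hmono (ih x y p q hp hq hpq))
  refine ⟨G, ?_, ⟨convex_univ, ?_⟩, ?_, ⟨C / n / (1 - r), ?_⟩, ?_⟩
  · intro X t
    refine tendsto_nhds_unique (hG _) (((hG X).add_const t).congr ?_)
    intro k
    simp only [hf, hiter_hom, min_add_add_right]
    field_simp
  · intro x _ y _ p q hp hq hpq
    refine le_of_tendsto_of_tendsto' (((hG x).const_mul p).add ((hG y).const_mul q)) (hG _) ?_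
    intro k
    have h := hiter_conc k x y p q hp hq hpq
    have h1 : p * (F^[k] x).1 + q * (F^[k] y).1 ≤ (F^[k] (p • x + q • y)).1 := h.1
    have h2 : p * (F^[k] x).2 + q * (F^[k] y).2 ≤ (F^[k] (p • x + q • y)).2 := h.2
    simp only [hf]
    rw [← mul_div_assoc, ← mul_div_assoc, ← add_div]
    gcongr
    refine le_min (le_trans ?_ h1) (le_trans ?_ h2) <;> gcongr
    all_goals first | exact min_le_left _ _ | exact min_le_right _ _
  · intro x y hxy
    refine le_of_tendsto_of_tendsto' (hG x) (hG y) ?_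
    intro k
    have h := hmono.iterate k hxy
    simp only [hf]
    gcongr
    exacts [h.1, h.2]
  · intro X
    have h := dist_le_of_le_geometric_of_tendsto₀ r _ hr1 (hstep X) (hG X)
    rw [dist_comm, Real.dist_eq] at h
    simpa [hf] using h
  · intro X
    refine tendsto_nhds_unique (hG _)
      ((((tendsto_add_atTop_iff_nat 1).2 (hG X)).const_mul (n : ℝ)).congr ?_)
    intro k
    simp only [hf, Function.iterate_succ_apply, pow_succ]
    field_simp

/-- The limit of `G - min` along `X.2 - X.1 → ∞` is the limit of the one-variable function
`d ↦ G (0, d)`. -/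
lemma tendsto_right_iff (G : ℝ × ℝ → ℝ)
    (hhom : ∀ (X : ℝ × ℝ) (t : ℝ), G (X.1 + t, X.2 + t) = G X + t) (L : ℝ) :
    Tendsto (fun X : ℝ × ℝ => G X - min X.1 X.2)
        (comap (fun X : ℝ × ℝ => X.2 - X.1) atTop) (nhds L) ↔
      Tendsto (fun d : ℝ => G (0, d)) atTop (nhds L) := by
  constructor
  · intro h
    have h1 : Tendsto (fun d : ℝ => ((0, d) : ℝ × ℝ)) atTop
        (comap (fun X : ℝ × ℝ => X.2 - X.1) atTop) := by
      rw [tendsto_comap_iff]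
      simp only [Function.comp_def, sub_zero]
      exact tendsto_id
    refine (h.comp h1).congr' ?_
    filter_upwards [eventually_ge_atTop 0] with d hd
    simp [hd]
  · intro h
    refine (h.comp tendsto_comap).congr' ?_
    filter_upwards [preimage_mem_comap (Ici_mem_atTop (0 : ℝ))] with X hX
    have hX : 0 ≤ X.2 - X.1 := hX
    have := hhom (0, X.2 - X.1) X.1
    simp only [zero_add, sub_add_cancel] at this
    rw [min_eq_left (by linarith), Function.comp_apply]
    linarith

/-- The mirror image of `tendsto_right_iff`. -/
lemma tendsto_left_iff (G : ℝ × ℝ → ℝ)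
    (hhom : ∀ (X : ℝ × ℝ) (t : ℝ), G (X.1 + t, X.2 + t) = G X + t) (L : ℝ) :
    Tendsto (fun X : ℝ × ℝ => G X - min X.1 X.2)
        (comap (fun X : ℝ × ℝ => X.1 - X.2) atTop) (nhds L) ↔
      Tendsto (fun d : ℝ => G (d, 0)) atTop (nhds L) := by
  constructor
  · intro h
    have h1 : Tendsto (fun d : ℝ => ((d, 0) : ℝ × ℝ)) atTop
        (comap (fun X : ℝ × ℝ => X.1 - X.2) atTop) := by
      rw [tendsto_comap_iff]
      simp only [Function.comp_def, sub_zero]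
      exact tendsto_id
    refine (h.comp h1).congr' ?_
    filter_upwards [eventually_ge_atTop 0] with d hd
    simp [hd]
  · intro h
    refine (h.comp tendsto_comap).congr' ?_
    filter_upwards [preimage_mem_comap (Ici_mem_atTop (0 : ℝ))] with X hX
    have hX : 0 ≤ X.1 - X.2 := hX
    have := hhom (X.1 - X.2, 0) X.2
    simp only [zero_add, sub_add_cancel] at this
    rw [min_eq_right (by linarith), Function.comp_apply]
    linarith

/-- A homogeneous monotone function with finite limits of `G - min` on both sides of the diagonal
stays at bounded distance from `min`: the lower bound is attained on the diagonal, the upper bounds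
are the limits. -/
lemma abs_sub_min_le (G : ℝ × ℝ → ℝ)
    (hhom : ∀ (X : ℝ × ℝ) (t : ℝ), G (X.1 + t, X.2 + t) = G X + t)
    (hm0 : ∀ X₁ : ℝ, Monotone fun X₀ => G (X₀, X₁))
    (hm1 : ∀ X₀ : ℝ, Monotone fun X₁ => G (X₀, X₁))
    (hr : ∃ L : ℝ, Tendsto (fun X : ℝ × ℝ => G X - min X.1 X.2)
        (comap (fun X : ℝ × ℝ => X.2 - X.1) atTop) (nhds L))
    (hl : ∃ L : ℝ, Tendsto (fun X : ℝ × ℝ => G X - min X.1 X.2)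
        (comap (fun X : ℝ × ℝ => X.1 - X.2) atTop) (nhds L)) :
    ∃ K, ∀ X : ℝ × ℝ, |G X - min X.1 X.2| ≤ K := by
  obtain ⟨L, hL⟩ := hr
  obtain ⟨M, hM⟩ := hl
  rw [tendsto_right_iff G hhom] at hL
  rw [tendsto_left_iff G hhom] at hM
  refine ⟨|G (0, 0)| + |L| + |M|, fun X => ?_⟩
  have key : G (0, 0) ≤ G X - min X.1 X.2 ∧ G X - min X.1 X.2 ≤ max L M := by
    rcases le_total X.1 X.2 with h | h
    · have e := hhom (0, X.2 - X.1) X.1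
      simp only [zero_add, sub_add_cancel] at e
      rw [min_eq_left h]
      have h1 := (hm1 0).ge_of_tendsto hL (X.2 - X.1)
      have h2 := hm1 0 (sub_nonneg.2 h)
      simp only at h1 h2
      constructor <;> linarith [le_max_left L M]
    · have e := hhom (X.1 - X.2, 0) X.2
      simp only [zero_add, sub_add_cancel] at e
      rw [min_eq_right h]
      have h1 := (hm0 0).ge_of_tendsto hM (X.1 - X.2)
      have h2 := hm0 0 (sub_nonneg.2 h)
      simp only at h1 h2
      constructor <;> linarith [le_max_right L M]
  have h3 : max L M ≤ |L| + |M| :=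
    max_le (by linarith [le_abs_self L, abs_nonneg M]) (by linarith [le_abs_self M, abs_nonneg L])
  rw [abs_le]
  constructor <;>
    linarith [neg_abs_le (G (0, 0)), abs_nonneg (G (0, 0)), abs_nonneg L, abs_nonneg M]

/-- Two solutions of the functional equation at bounded distance from each other coincide. -/
lemma eq_of_bounded (n : ℕ) (hn : 2 ≤ n) (F : ℝ × ℝ → ℝ × ℝ) (G H : ℝ × ℝ → ℝ) (K : ℝ)
    (hK : ∀ X, |G X - H X| ≤ K) (hG : ∀ X, G (F X) = n * G X) (hH : ∀ X, H (F X) = n * H X) :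
    G = H := by
  have hn1 : (1 : ℝ) < n := by exact_mod_cast hn
  funext X
  have hit : ∀ k : ℕ, G (F^[k] X) - H (F^[k] X) = n ^ k * (G X - H X) := by
    intro k
    induction k with
    | zero => simp
    | succ k ih => rw [Function.iterate_succ_apply', hG, hH, ← mul_sub, ih, pow_succ']; ring
  by_contra hne
  have hpos : 0 < |G X - H X| := abs_pos.2 (sub_ne_zero.2 hne)
  obtain ⟨k, hk⟩ := pow_unbounded_of_one_lt (K / |G X - H X|) hn1
  have h := hK (F^[k] X)
  rw [hit, abs_mul, abs_of_pos (pow_pos (by linarith) k)] at h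
  rw [div_lt_iff₀ hpos] at hk
  linarith

/-- The distance from `min ∘ F` to `n * min` is bounded. The upper bound uses the extreme terms
`(n, 0)` and `(0, n)`, the lower bound that every term has total weight `n`. -/
lemma exists_bound (n : ℕ)
    (s : Fin 2 → Finset ℕ) (hs : ∀ i, (s i).Nonempty)
    (a b : Fin 2 → ℕ → ℕ) (cc : Fin 2 → ℕ → ℝ)
    (hab : ∀ i, ∀ j ∈ s i, a i j + b i j = n)
    (hnorm1 : ∃ i, ∃ j ∈ s i, a i j = n ∧ b i j = 0)
    (hnorm2 : ∃ i, ∃ j ∈ s i, a i j = 0 ∧ b i j = n)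
    (Fc : Fin 2 → ℝ × ℝ → ℝ)
    (hFc : Fc = fun i X => (s i).inf' (hs i)
      fun j => (a i j : ℝ) * X.1 + (b i j : ℝ) * X.2 + cc i j) :
    ∃ C, ∀ X : ℝ × ℝ, |min (Fc 0 X) (Fc 1 X) - n * min X.1 X.2| ≤ C := by
  set C : ℝ := ∑ i, ∑ j ∈ s i, |cc i j| with hCdef
  have hc : ∀ i, ∀ j ∈ s i, |cc i j| ≤ C := by
    intro i j hj
    refine (Finset.single_le_sum (f := fun j => |cc i j|) (fun _ _ => abs_nonneg _) hj).trans ?_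
    exact Finset.single_le_sum (f := fun i => ∑ j ∈ s i, |cc i j|)
      (fun _ _ => Finset.sum_nonneg fun _ _ => abs_nonneg _) (Finset.mem_univ i)
  have hle : ∀ X : ℝ × ℝ, ∀ i, ∀ j ∈ s i, min (Fc 0 X) (Fc 1 X) ≤
      (a i j : ℝ) * X.1 + (b i j : ℝ) * X.2 + cc i j := by
    intro X i j hj
    have h1 : Fc i X ≤ (a i j : ℝ) * X.1 + (b i j : ℝ) * X.2 + cc i j := by
      rw [hFc]
      exact Finset.inf'_le (fun j => (a i j : ℝ) * X.1 + (b i j : ℝ) * X.2 + cc i j) hj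
    refine le_trans ?_ h1
    fin_cases i
    exacts [min_le_left _ _, min_le_right _ _]
  have hge : ∀ X : ℝ × ℝ, ∀ i, n * min X.1 X.2 - C ≤ Fc i X := by
    intro X i
    rw [hFc]
    refine Finset.le_inf' _ _ fun j hj => ?_
    have e : (n : ℝ) = a i j + b i j := by exact_mod_cast (hab i j hj).symm
    have h1 := mul_le_mul_of_nonneg_left (min_le_left X.1 X.2) (Nat.cast_nonneg (α := ℝ) (a i j))
    have h2 := mul_le_mul_of_nonneg_left (min_le_right X.1 X.2) (Nat.cast_nonneg (α := ℝ) (b i j))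
    have h3 := (abs_le.1 (hc i j hj)).1
    rw [e, add_mul]
    linarith
  refine ⟨C, fun X => abs_le.2 ⟨?_, ?_⟩⟩
  · linarith [le_min (hge X 0) (hge X 1)]
  · obtain ⟨i, j, hj, ha, hb⟩ := hnorm1
    obtain ⟨i', j', hj', ha', hb'⟩ := hnorm2
    have h1 := hle X i j hj
    have h2 := hle X i' j' hj'
    rw [ha, hb] at h1
    rw [ha', hb'] at h2
    have h3 := (abs_le.1 (hc i j hj)).2
    have h4 := (abs_le.1 (hc i' j' hj')).2
    rcases min_choice X.1 X.2 with h | h <;> rw [h] <;> push_cast at h1 h2 <;> linarith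

/-- Existence and uniqueness of the potential for a degree-`n` PL map of the
line.  `F = (F₀, F₁)` has components which are minima of nonempty finite families of
affine functions `a·X₀ + b·X₁ + c` with natural coefficients satisfying `a + b = n`, and
among all terms there occurs at least one with `(a,b) = (n,0)` and one with
`(a,b) = (0,n)`.  Then there is a unique `G : ℝ² → ℝ` which: (i) is homogeneous of
degree 1; (ii) is concave, nondecreasing in each variable, and
`G(X₀,X₁) − min(X₀,X₁)` has finite limits as `X₁−X₀ → +∞` and as `X₀−X₁ → +∞`;
(iii) satisfies `G(F(X)) = n·G(X)`. -/
theorem stmt_9 (n : ℕ) (hn : 2 ≤ n)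
    (s : Fin 2 → Finset ℕ) (hs : ∀ i, (s i).Nonempty)
    (a b : Fin 2 → ℕ → ℕ) (cc : Fin 2 → ℕ → ℝ)
    (hab : ∀ i, ∀ j ∈ s i, a i j + b i j = n)
    (hnorm1 : ∃ i, ∃ j ∈ s i, a i j = n ∧ b i j = 0)
    (hnorm2 : ∃ i, ∃ j ∈ s i, a i j = 0 ∧ b i j = n) :
    let Fc : Fin 2 → ℝ × ℝ → ℝ := fun i X =>
      (s i).inf' (hs i) fun j => (a i j : ℝ) * X.1 + (b i j : ℝ) * X.2 + cc i j
    let F : ℝ × ℝ → ℝ × ℝ := fun X => (Fc 0 X, Fc 1 X)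
    ∃! G : ℝ × ℝ → ℝ,
      (∀ (X : ℝ × ℝ) (t : ℝ), G (X.1 + t, X.2 + t) = G X + t) ∧
      ConcaveOn ℝ Set.univ G ∧
      (∀ X₁ : ℝ, Monotone fun X₀ => G (X₀, X₁)) ∧
      (∀ X₀ : ℝ, Monotone fun X₁ => G (X₀, X₁)) ∧
      (∃ L : ℝ, Tendsto (fun X : ℝ × ℝ => G X - min X.1 X.2)
        (comap (fun X : ℝ × ℝ => X.2 - X.1) atTop) (nhds L)) ∧
      (∃ L : ℝ, Tendsto (fun X : ℝ × ℝ => G X - min X.1 X.2)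
        (comap (fun X : ℝ × ℝ => X.1 - X.2) atTop) (nhds L)) ∧
      (∀ X : ℝ × ℝ, G (F X) = n * G X) := by
  intro Fc F
  obtain ⟨C, hC⟩ := exists_bound n s hs a b cc hab hnorm1 hnorm2 Fc rfl
  have hmono : Monotone F := by
    have h : ∀ i, Monotone (Fc i) := by
      intro i x y hxy
      refine Finset.le_inf' _ _ fun j hj => (Finset.inf'_le _ hj).trans ?_
      have h1 : x.1 ≤ y.1 := hxy.1
      have h2 : x.2 ≤ y.2 := hxy.2
      gcongr
    exact fun x y hxy => ⟨h 0 hxy, h 1 hxy⟩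
  have hhom : ∀ (X : ℝ × ℝ) (t : ℝ),
      F (X.1 + t, X.2 + t) = ((F X).1 + n * t, (F X).2 + n * t) := by
    -- One inequality suffices: the other follows by translating back by `-t`.
    have h : ∀ i (X : ℝ × ℝ) (t : ℝ), Fc i X + n * t ≤ Fc i (X.1 + t, X.2 + t) := by
      intro i X t
      refine Finset.le_inf' _ _ fun j hj => ?_
      have h1 : Fc i X ≤ (a i j : ℝ) * X.1 + (b i j : ℝ) * X.2 + cc i j :=
        Finset.inf'_le (fun j => (a i j : ℝ) * X.1 + (b i j : ℝ) * X.2 + cc i j) hj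
      have e : (n : ℝ) = a i j + b i j := by exact_mod_cast (hab i j hj).symm
      rw [e]
      dsimp only
      linarith
    have h' : ∀ i (X : ℝ × ℝ) (t : ℝ), Fc i (X.1 + t, X.2 + t) = Fc i X + n * t := by
      intro i X t
      refine le_antisymm ?_ (h i X t)
      have := h i (X.1 + t, X.2 + t) (-t)
      simp only [add_neg_cancel_right] at this
      linarith
    exact fun X t => Prod.ext (h' 0 X t) (h' 1 X t)
  have hconc : ∀ (x y : ℝ × ℝ) (p q : ℝ), 0 ≤ p → 0 ≤ q → p + q = 1 →
      p • F x + q • F y ≤ F (p • x + q • y) := by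
    intro x y p q hp hq hpq
    have h : ∀ i, p * Fc i x + q * Fc i y ≤ Fc i (p • x + q • y) := by
      intro i
      refine Finset.le_inf' _ _ fun j hj => ?_
      have hx : Fc i x ≤ (a i j : ℝ) * x.1 + (b i j : ℝ) * x.2 + cc i j :=
        Finset.inf'_le (fun j => (a i j : ℝ) * x.1 + (b i j : ℝ) * x.2 + cc i j) hj
      have hy : Fc i y ≤ (a i j : ℝ) * y.1 + (b i j : ℝ) * y.2 + cc i j :=
        Finset.inf'_le (fun j => (a i j : ℝ) * y.1 + (b i j : ℝ) * y.2 + cc i j) hj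
      have h1 := mul_le_mul_of_nonneg_left hx hp
      have h2 := mul_le_mul_of_nonneg_left hy hq
      have e : cc i j = p * cc i j + q * cc i j := by rw [← add_mul, hpq, one_mul]
      simp only [Prod.fst_add, Prod.snd_add, Prod.smul_fst, Prod.smul_snd, smul_eq_mul]
      linarith
    exact ⟨h 0, h 1⟩
  obtain ⟨G, hGhom, hGconc, hGmono, ⟨K, hK⟩, hGF⟩ :=
    exists_potential n hn F C hhom hmono hconc hC
  have hm0 : ∀ X₁ : ℝ, Monotone fun X₀ => G (X₀, X₁) :=
    fun X₁ x y h => hGmono (Prod.mk_le_mk.2 ⟨h, le_rfl⟩)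
  have hm1 : ∀ X₀ : ℝ, Monotone fun X₁ => G (X₀, X₁) :=
    fun X₀ x y h => hGmono (Prod.mk_le_mk.2 ⟨le_rfl, h⟩)
  refine ⟨G, ⟨hGhom, hGconc, hm0, hm1, ?_, ?_, hGF⟩, ?_⟩
  · have hbdd : BddAbove (Set.range fun d : ℝ => G (0, d)) := by
      refine ⟨K, ?_⟩
      rintro _ ⟨d, rfl⟩
      have := (abs_le.1 (hK (0, d))).2
      have h0 : min (0 : ℝ) d ≤ 0 := min_le_left _ _
      dsimp only at this ⊢
      linarith
    exact ⟨_, (tendsto_right_iff G hGhom _).2 (tendsto_atTop_ciSup (hm1 0) hbdd)⟩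
  · have hbdd : BddAbove (Set.range fun d : ℝ => G (d, 0)) := by
      refine ⟨K, ?_⟩
      rintro _ ⟨d, rfl⟩
      have := (abs_le.1 (hK (d, 0))).2
      have h0 : min d (0 : ℝ) ≤ 0 := min_le_right _ _
      dsimp only at this ⊢
      linarith
    exact ⟨_, (tendsto_left_iff G hGhom _).2 (tendsto_atTop_ciSup (hm0 0) hbdd)⟩
  · rintro H ⟨hHhom, -, hHm0, hHm1, hHr, hHl, hHF⟩
    obtain ⟨K', hK'⟩ := abs_sub_min_le H hHhom hHm0 hHm1 hHr hHl
    refine eq_of_bounded n hn F H G (K' + K) (fun X => ?_) hHF hGF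
    have h1 := abs_le.1 (hK' X)
    have h2 := abs_le.1 (hK X)
    exact abs_le.2 ⟨by linarith, by linarith⟩
end

section
/- Let ε > 0 and l, r ∈ ℝ with |l|·ε ≤ 1 and |r|·ε ≤ 1, and let f : (−ε,ε) → (−1,1) be the piecewise linear map f(x) = l·x for x ≤ 0 and f(x) = r·x for x ≥ 0. Let g be concave on (−1,1). Then the distribution μ_{g∘f} on (−ε,ε) is a measure, equal to |l| times the pushforward under the inverse of f|_{(−ε,0)} of μ_g restricted to f((−ε,0)), plus |r| times the pushforward under the inverse of f|_{(0,ε)} of μ_g restricted to f((0,ε)), plus c_{f,g}·δ₀, where δ₀ is the Dirac mass at 0 and c_{f,g} = l·g'_l(0) − r·g'_r(0) if l ≥ 0 and r ≥ 0; c_{f,g} = (l − r)·g'_l(0) if l ≥ 0 ≥ r; c_{f,g} = (l − r)·g'_r(0) if l ≤ 0 ≤ r; c_{f,g} = l·g'_r(0) − r·g'_l(0) if l ≤ 0 and r ≤ 0. -/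
/-!
Write `h x = g (s x)` for a linear branch of slope `s ≠ 0`. By scaling, `-h''` is represented on
`(-ε, ε)` by `ν = |s| · (y ↦ y / s)_* μ` (`Represents.scale`). The heart of the matter is a one-sided
Green formula (`Represents.right`): if `h` is continuous with right derivative `d` at `0`, then
`-∫_{(0,ε)} h φ'' = ∫_{(0,ε)} φ dν + h(0) φ'(0) - d φ(0)`.
Subtracting `h(0) + d x` reduces it to `h = o(x)` at `0⁺`; there one tests against `φ χ(·/δ)` with
a smooth step `χ` and lets `δ → 0⁺` (`Represents.right_of_flat`). Adding the formulas for the two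
branches, the left one reflected, the terms `g(0) φ'(0)` cancel, and the one-sided slopes at `0`
make up the coefficient of the Dirac mass.

Concavity only enters through the continuity of `g`. As `μ` is not assumed locally finite,
a test function may fail to be integrable; then `-h''` is the zero distribution
(`Represents.zero_of_not_integrable`), and the formula for the measure `0` gives the claim.
-/

open MeasureTheory Set
open Filter Topology

/-! ### Test functions -/

/-- Test functions on `(-ε, ε)`: smooth functions on `ℝ` with compact support in the interval. -/
structure IsTest (ε : ℝ) (φ : ℝ → ℝ) : Prop where
  smooth : ContDiff ℝ (⊤ : ℕ∞) φ
  compact : HasCompactSupport φ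
  supp : tsupport φ ⊆ Ioo (-ε) ε

/-- The measure `ν` represents the distribution `-h''` on `(-ε, ε)`. Local finiteness of `ν` is not
required, so a test function may fail to be `ν`-integrable, and then the left side is `0`. -/
def Represents (ε : ℝ) (h : ℝ → ℝ) (ν : Measure ℝ) : Prop :=
  ∀ φ, IsTest ε φ → ∫ y, φ y ∂ν = -∫ y in Ioo (-ε) ε, h y * deriv (deriv φ) y

namespace IsTest

variable {ε : ℝ} {φ ψ : ℝ → ℝ}

lemma deriv (hφ : IsTest ε φ) : IsTest ε (deriv φ) :=
  ⟨(contDiff_infty_iff_deriv.1 hφ.smooth).2, hφ.compact.deriv, tsupport_deriv_subset.trans hφ.supp⟩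

lemma hasDerivAt (hφ : IsTest ε φ) (x : ℝ) : HasDerivAt φ (_root_.deriv φ x) x :=
  (hφ.smooth.differentiable (by simp) x).hasDerivAt

lemma add (hφ : IsTest ε φ) (hψ : IsTest ε ψ) : IsTest ε (fun x => φ x + ψ x) :=
  ⟨hφ.smooth.add hψ.smooth, hφ.compact.add hψ.compact,
    (tsupport_add φ ψ).trans (union_subset hφ.supp hψ.supp)⟩

lemma mul_smooth (hφ : IsTest ε φ) (hψ : ContDiff ℝ (⊤ : ℕ∞) ψ) :
    IsTest ε (fun x => φ x * ψ x) :=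
  ⟨hφ.smooth.mul hψ, hφ.compact.mul_right, tsupport_mul_subset_left.trans hφ.supp⟩

lemma eq_zero (hφ : IsTest ε φ) {x : ℝ} (hx : x ∉ Ioo (-ε) ε) : φ x = 0 :=
  image_eq_zero_of_notMem_tsupport fun h => hx (hφ.supp h)

lemma integrable_mul (hφ : IsTest ε φ) {h : ℝ → ℝ} (hh : ContinuousOn h (Ioo (-ε) ε)) :
    Integrable (fun x => h x * φ x) := by
  have hc : Continuous (fun x => h x * φ x) :=
    (hh.mul hφ.smooth.continuous.continuousOn).continuous_of_tsupport_subset isOpen_Ioo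
      (tsupport_mul_subset_right.trans hφ.supp)
  exact hc.integrable_of_hasCompactSupport hφ.compact.mul_left

lemma comp_mul (hφ : IsTest ε φ) {η s : ℝ} (hs : s ≠ 0) (hη : ε ≤ |s| * η) :
    IsTest η (fun x => φ (s * x)) := by
  have e : (fun x => φ (s * x)) = φ ∘ (Homeomorph.mulLeft₀ s hs) := rfl
  refine ⟨hφ.smooth.comp (by fun_prop), ?_, ?_⟩
  · rw [e]; exact hφ.compact.comp_homeomorph _
  · rw [e, tsupport_comp_eq_preimage]
    intro x hx
    have h1 := hφ.supp hx
    simp only [Homeomorph.coe_mulLeft₀] at h1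
    have h2 : |s * x| < ε := abs_lt.2 h1
    rw [abs_mul] at h2
    exact abs_lt.1 (lt_of_mul_lt_mul_left (h2.trans_le hη) (abs_nonneg s))

lemma deriv2_comp_mul (hφ : IsTest ε φ) (s x : ℝ) :
    _root_.deriv (_root_.deriv fun x => φ (s * x)) x
      = s ^ 2 * _root_.deriv (_root_.deriv φ) (s * x) := by
  have key : ∀ {χ : ℝ → ℝ}, IsTest ε χ → ∀ x,
      HasDerivAt (fun x => χ (s * x)) (s * _root_.deriv χ (s * x)) x := by
    intro χ hχ x
    have := (hχ.hasDerivAt (s * x)).comp x ((hasDerivAt_id x).const_mul s)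
    simpa [mul_comm, Function.comp_def] using this
  have e : (_root_.deriv fun x => φ (s * x)) = fun x => s * _root_.deriv φ (s * x) :=
    funext fun x => (key hφ x).deriv
  rw [e, ((key hφ.deriv x).const_mul s).deriv]
  ring

/-- Twofold integration by parts of a test function against an affine function. -/
lemma integral_affine (hφ : IsTest ε φ) (p d : ℝ) {a : ℝ} (ha : a ≤ ε) :
    ∫ x in Ioo a ε, (p + d * x) * _root_.deriv (_root_.deriv φ) x
      = d * φ a - (p + d * a) * _root_.deriv φ a := by
  have hF : ∀ x, HasDerivAt (fun x => (p + d * x) * _root_.deriv φ x - d * φ x)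
      ((p + d * x) * _root_.deriv (_root_.deriv φ) x) x := by
    intro x
    have h1 : HasDerivAt (fun x => p + d * x) d x := by
      simpa using ((hasDerivAt_id x).const_mul d).const_add p
    exact ((h1.mul (hφ.deriv.hasDerivAt x)).sub ((hφ.hasDerivAt x).const_mul d)).congr_deriv
      (by ring)
  have hε : ε ∉ Ioo (-ε) ε := by simp
  have hc := hφ.deriv.deriv.smooth.continuous
  rw [← integral_Ioc_eq_integral_Ioo, ← intervalIntegral.integral_of_le ha,
    intervalIntegral.integral_eq_sub_of_hasDerivAt (fun x _ => hF x)
      (Continuous.intervalIntegrable (by fun_prop) _ _), hφ.eq_zero hε, hφ.deriv.eq_zero hε]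
  ring

end IsTest

/-! ### Distributions represented by measures -/

/-- If some test function `φ` is not integrable, then `-h'' = 0` as a distribution: for integrable
`ψ` neither `φ` nor `φ + ψ` is integrable, so both have integral `0` by convention and `-h''`
vanishes on both, hence on `ψ`. -/
lemma Represents.zero_of_not_integrable {ε : ℝ} {h : ℝ → ℝ} {ν : Measure ℝ}
    (hh : ContinuousOn h (Ioo (-ε) ε)) (hν : Represents ε h ν) {φ : ℝ → ℝ} (hφ : IsTest ε φ)
    (hn : ¬ Integrable φ ν) : Represents ε h 0 := by
  intro ψ hψ
  rw [integral_zero_measure, ← hν ψ hψ]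
  by_cases hi : Integrable ψ ν
  · have h1 : ¬ Integrable (fun x => φ x + ψ x) ν := fun hs =>
      hn ((hs.sub hi).congr (Eventually.of_forall fun x => by simp))
    have h2 := hν _ (hφ.add hψ)
    have h3 := hν _ hφ
    rw [integral_undef h1] at h2
    rw [integral_undef hn] at h3
    have e1 : deriv (fun x => φ x + ψ x) = fun x => deriv φ x + deriv ψ x :=
      funext fun x => ((hφ.hasDerivAt x).add (hψ.hasDerivAt x)).deriv
    have e2 : deriv (fun x => deriv φ x + deriv ψ x)
        = fun x => deriv (deriv φ) x + deriv (deriv ψ) x :=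
      funext fun x => ((hφ.deriv.hasDerivAt x).add (hψ.deriv.hasDerivAt x)).deriv
    rw [e1, e2] at h2
    simp only [mul_add] at h2
    rw [integral_add (hφ.deriv.deriv.integrable_mul hh).integrableOn
      (hψ.deriv.deriv.integrable_mul hh).integrableOn] at h2
    rw [hν ψ hψ]
    linarith
  · rw [integral_undef hi]

/-- A smooth step from `0` on `(-∞, 1]` to `1` on `[2, ∞)`, with its first two derivatives, which
are bounded and live on `[1, 2]`. -/
lemma exists_step : ∃ (χ χ₁ χ₂ : ℝ → ℝ) (C : ℝ), ContDiff ℝ (⊤ : ℕ∞) χ ∧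
    (∀ x, HasDerivAt χ (χ₁ x) x) ∧ (∀ x, HasDerivAt χ₁ (χ₂ x) x) ∧
    (∀ x ≤ 1, χ x = 0) ∧ (∀ x, 2 ≤ x → χ x = 1) ∧ (∀ x, |χ x| ≤ 1) ∧
    (∀ x ∉ Icc (1 : ℝ) 2, χ₁ x = 0 ∧ χ₂ x = 0) ∧ 0 ≤ C ∧ (∀ x, |χ₁ x| ≤ C ∧ |χ₂ x| ≤ C) := by
  set χ : ℝ → ℝ := fun x => Real.smoothTransition (x - 1) with hχ
  have hs : ContDiff ℝ (⊤ : ℕ∞) χ := Real.smoothTransition.contDiff.comp (by fun_prop)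
  have hs1 : ContDiff ℝ (⊤ : ℕ∞) (deriv χ) := (contDiff_infty_iff_deriv.1 hs).2
  have hs2 : ContDiff ℝ (⊤ : ℕ∞) (deriv (deriv χ)) := (contDiff_infty_iff_deriv.1 hs1).2
  have h0 : ∀ x ≤ 1, χ x = 0 := fun x hx =>
    Real.smoothTransition.zero_of_nonpos (by linarith)
  have h1 : ∀ x, 2 ≤ x → χ x = 1 := fun x hx =>
    Real.smoothTransition.one_of_one_le (by linarith)
  have d1 : ∀ x ∉ Icc (1 : ℝ) 2, deriv χ x = 0 := by
    intro x hx
    rcases lt_or_ge x 1 with h | h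
    · have : χ =ᶠ[𝓝 x] fun _ => 0 := by
        filter_upwards [Iio_mem_nhds h] with y hy using h0 y (le_of_lt hy)
      rw [this.deriv_eq]; simp
    · have h' : 2 < x := by by_contra h'; exact hx ⟨h, not_lt.1 h'⟩
      have : χ =ᶠ[𝓝 x] fun _ => 1 := by
        filter_upwards [Ioi_mem_nhds h'] with y hy using h1 y (le_of_lt hy)
      rw [this.deriv_eq]; simp
  have d2 : ∀ x ∉ Icc (1 : ℝ) 2, deriv (deriv χ) x = 0 := by
    intro x hx
    have : deriv χ =ᶠ[𝓝 x] fun _ => 0 := by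
      filter_upwards [isClosed_Icc.isOpen_compl.mem_nhds hx] with y hy using d1 y hy
    rw [this.deriv_eq]; simp
  obtain ⟨C₁, hC₁⟩ := (isCompact_Icc (a := (1 : ℝ)) (b := 2)).exists_bound_of_continuousOn
    hs1.continuous.continuousOn
  obtain ⟨C₂, hC₂⟩ := (isCompact_Icc (a := (1 : ℝ)) (b := 2)).exists_bound_of_continuousOn
    hs2.continuous.continuousOn
  refine ⟨χ, deriv χ, deriv (deriv χ), max 0 (max C₁ C₂), hs,
    fun x => (hs.differentiable (by simp) x).hasDerivAt,
    fun x => (hs1.differentiable (by simp) x).hasDerivAt, h0, h1, ?_,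
    fun x hx => ⟨d1 x hx, d2 x hx⟩, le_max_left _ _, ?_⟩
  · intro x
    rw [abs_of_nonneg (Real.smoothTransition.nonneg _)]
    exact Real.smoothTransition.le_one _
  · intro x
    by_cases hx : x ∈ Icc (1 : ℝ) 2
    · exact ⟨(hC₁ x hx).trans (by simp), (hC₂ x hx).trans (by simp)⟩
    · simp [d1 x hx, d2 x hx]

lemma tendsto_integral_step {ν : Measure ℝ} {u χ : ℝ → ℝ} (hu : IntegrableOn u (Ioi 0) ν)
    (hc : Continuous χ) (h0 : ∀ x ≤ 1, χ x = 0) (h1 : ∀ x, 2 ≤ x → χ x = 1)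
    (hb : ∀ x, |χ x| ≤ 1) :
    Tendsto (fun δ => ∫ x, u x * χ (x / δ) ∂ν) (𝓝[>] 0) (𝓝 (∫ x in Ioi 0, u x ∂ν)) := by
  have hlim : Tendsto (fun δ => ∫ x in Ioi 0, u x * χ (x / δ) ∂ν) (𝓝[>] 0)
      (𝓝 (∫ x in Ioi 0, u x ∂ν)) := by
    refine tendsto_integral_filter_of_dominated_convergence (fun x => |u x|) ?_ ?_ hu.abs ?_
    · exact Eventually.of_forall fun δ => hu.aestronglyMeasurable.mul
        (hc.comp (continuous_id.div_const δ)).aestronglyMeasurable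
    · refine Eventually.of_forall fun δ => Eventually.of_forall fun x => ?_
      rw [Real.norm_eq_abs, abs_mul]
      exact mul_le_of_le_one_right (abs_nonneg _) (hb _)
    · filter_upwards [ae_restrict_mem measurableSet_Ioi] with x hx
      have hx' : (0 : ℝ) < x := hx
      refine tendsto_const_nhds.congr' ?_
      filter_upwards [self_mem_nhdsWithin,
        nhdsWithin_le_nhds (Iio_mem_nhds (half_pos hx'))] with δ hδ hδ'
      have hδ0 : (0 : ℝ) < δ := hδ
      have hδ1 : δ < x / 2 := hδ'
      rw [h1 _ (by rw [le_div_iff₀ hδ0]; linarith), mul_one]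
  refine hlim.congr' ?_
  filter_upwards [self_mem_nhdsWithin] with δ hδ
  have hδ0 : (0 : ℝ) < δ := hδ
  refine setIntegral_eq_integral_of_forall_compl_eq_zero fun x hx => ?_
  have hx' : x ≤ 0 := not_lt.1 hx
  rw [h0 _ ((div_nonpos_of_nonpos_of_nonneg hx' hδ0.le).trans zero_le_one), mul_zero]

/-! ### The one-sided Green formula -/

/-- The one-sided identity when `h` vanishes to first order at `0` from the right: test against
`φ χ(·/δ)` and let `δ → 0⁺`. The terms in which the cutoff is differentiated live on `[δ, 2δ]`,
where `h = o(δ)`, while the derivatives of the cutoff are `O(δ⁻²)`. -/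
lemma Represents.right_of_flat {ε : ℝ} {h : ℝ → ℝ} {ν : Measure ℝ}
    (hh : ContinuousOn h (Ioo (-ε) ε)) (h0 : h 0 = 0) (hd : HasDerivWithinAt h 0 (Ici 0) 0)
    (hν : Represents ε h ν) {φ : ℝ → ℝ} (hφ : IsTest ε φ) (hi : IntegrableOn φ (Ioi 0) ν) :
    ∫ x in Ioi 0, φ x ∂ν = -∫ x in Ioi 0, h x * deriv (deriv φ) x := by
  obtain ⟨χ, χ₁, χ₂, C, hs, hχ₁, hχ₂, hz, ho, hb, hoff, hC, hCb⟩ := exists_step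
  obtain ⟨M₀, hM₀⟩ := hφ.compact.exists_bound_of_continuous hφ.smooth.continuous
  obtain ⟨M₁, hM₁⟩ := hφ.deriv.compact.exists_bound_of_continuous hφ.deriv.smooth.continuous
  set M := max M₀ M₁ with hM
  have hMφ : ∀ x, |φ x| ≤ M := fun x => (hM₀ x).trans (le_max_left _ _)
  have hMφ' : ∀ x, |deriv φ x| ≤ M := fun x => (hM₁ x).trans (le_max_right _ _)
  have hM0 : 0 ≤ M := (abs_nonneg _).trans (hMφ 0)
  have t1 := tendsto_integral_step hi hs.continuous hz ho hb
  have t2 := tendsto_integral_step (hφ.deriv.deriv.integrable_mul hh).integrableOn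
    hs.continuous hz ho hb
  set E : ℝ → ℝ → ℝ := fun δ x =>
    h x * (2 * deriv φ x * (χ₁ (x / δ) / δ) + φ x * (χ₂ (x / δ) / δ ^ 2)) with hE
  have hEsupp : ∀ δ > 0, ∀ x ∉ Icc δ (2 * δ), E δ x = 0 := by
    intro δ hδ x hx
    have : x / δ ∉ Icc (1 : ℝ) 2 := by
      rintro ⟨ha, hb⟩
      rw [le_div_iff₀ hδ] at ha
      rw [div_le_iff₀ hδ] at hb
      exact hx ⟨by linarith, hb⟩
    simp [hE, hoff _ this]
  have t3 : Tendsto (fun δ => ∫ x, E δ x) (𝓝[>] 0) (𝓝 0) := by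
    rw [Metric.tendsto_nhds]
    intro η hη
    -- `6 * M * C * κ < η` is what the final estimate needs
    set κ := η / (6 * M * C + 1) with hκ
    have hden : 0 < 6 * M * C + 1 := by positivity
    have hκ0 : 0 < κ := by positivity
    have hlo : ∀ᶠ x in 𝓝[Ici 0] (0 : ℝ), |h x| ≤ κ * |x| := by
      have := (hasDerivWithinAt_iff_isLittleO.1 hd).bound hκ0
      filter_upwards [this] with x hx
      simpa [h0] using hx
    obtain ⟨ρ, hρ, hρ'⟩ := Metric.mem_nhdsWithin_iff.1 hlo
    filter_upwards [self_mem_nhdsWithin, nhdsWithin_le_nhds (Iio_mem_nhds (half_pos hρ)),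
      nhdsWithin_le_nhds (Iio_mem_nhds zero_lt_one)] with δ hδ hδρ hδ1
    have hδ0 : (0 : ℝ) < δ := hδ
    have hδρ : δ < ρ / 2 := hδρ
    have hδ1 : δ < 1 := hδ1
    rw [dist_zero_right, ← setIntegral_eq_integral_of_forall_compl_eq_zero (hEsupp δ hδ0)]
    have hbd : ∀ x ∈ Icc δ (2 * δ),
        ‖E δ x‖ ≤ (κ * (2 * δ)) * (2 * M * (C / δ) + M * (C / δ ^ 2)) := by
      intro x hx
      have hx0 : 0 < x := hδ0.trans_le hx.1
      have h1 : |h x| ≤ κ * |x| := hρ' ⟨by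
        rw [Metric.mem_ball, dist_zero_right, Real.norm_eq_abs, abs_of_pos hx0]
        linarith [hx.2], hx0.le⟩
      rw [abs_of_pos hx0] at h1
      simp only [hE, Real.norm_eq_abs]
      rw [abs_mul]
      refine mul_le_mul (h1.trans (by gcongr; exact hx.2)) ?_ (abs_nonneg _) (by positivity)
      refine (abs_add_le _ _).trans (add_le_add ?_ ?_)
      · rw [abs_mul, abs_mul, abs_div, abs_of_pos hδ0, abs_of_pos (zero_lt_two' ℝ)]
        gcongr
        exacts [hMφ' x, (hCb _).1]
      · rw [abs_mul, abs_div, abs_of_pos (pow_pos hδ0 2)]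
        gcongr
        exacts [hMφ x, (hCb _).2]
    have hvol : volume (Icc δ (2 * δ)) < ⊤ := by simp
    refine (norm_setIntegral_le_of_norm_le_const hvol hbd).trans_lt ?_
    rw [Real.volume_real_Icc_of_le (by linarith)]
    have e : (κ * (2 * δ)) * (2 * M * (C / δ) + M * (C / δ ^ 2)) * (2 * δ - δ)
        = κ * (M * C) * (4 * δ + 2) := by
      field_simp
      ring
    rw [e]
    calc κ * (M * C) * (4 * δ + 2) ≤ κ * (M * C) * 6 := by gcongr; linarith
      _ < κ * (6 * M * C + 1) := by nlinarith
      _ = η := by rw [hκ]; field_simp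
  have key : ∀ δ > 0, ∫ x, φ x * χ (x / δ) ∂ν
      = -(∫ x, h x * deriv (deriv φ) x * χ (x / δ)) - ∫ x, E δ x := by
    intro δ hδ
    have hsδ : ContDiff ℝ (⊤ : ℕ∞) (fun x => χ (x / δ)) := hs.comp (by fun_prop)
    have hψ := hφ.mul_smooth hsδ
    have hc : ∀ {a b : ℝ → ℝ}, (∀ x, HasDerivAt a (b x) x) → ∀ x,
        HasDerivAt (fun x => a (x / δ)) (b (x / δ) / δ) x := by
      intro a b hab x
      have := (hab (x / δ)).comp x ((hasDerivAt_id x).div_const δ)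
      simpa [Function.comp_def, div_eq_mul_inv] using this
    have e1 : deriv (fun x => φ x * χ (x / δ))
        = fun x => deriv φ x * χ (x / δ) + φ x * (χ₁ (x / δ) / δ) :=
      funext fun x => ((hφ.hasDerivAt x).mul (hc hχ₁ x)).deriv
    have e2 : ∀ x, h x * deriv (deriv fun x => φ x * χ (x / δ)) x
        = h x * deriv (deriv φ) x * χ (x / δ) + E δ x := by
      intro x
      have h2 : HasDerivAt (fun x => deriv φ x * χ (x / δ) + φ x * (χ₁ (x / δ) / δ)) _ x :=
        ((hφ.deriv.hasDerivAt x).mul (hc hχ₁ x)).add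
          ((hφ.hasDerivAt x).mul ((hc hχ₂ x).div_const δ))
      rw [e1, h2.deriv]
      simp only [hE]
      field_simp
      ring
    have i1 : Integrable (fun x => h x * deriv (deriv φ) x * χ (x / δ)) := by
      simpa [mul_assoc] using (hφ.deriv.deriv.mul_smooth hsδ).integrable_mul hh
    have i2 : Integrable (E δ) :=
      ((hψ.deriv.deriv.integrable_mul hh).sub i1).congr
        (Eventually.of_forall fun x => by simp [e2])
    rw [hν _ hψ, setIntegral_eq_integral_of_forall_compl_eq_zero
      (fun x hx => by rw [hψ.deriv.deriv.eq_zero hx, mul_zero])]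
    simp only [e2]
    rw [integral_add i1 i2]
    ring
  have t4 := (t2.neg.sub t3).congr' (f₂ := fun δ => ∫ x, φ x * χ (x / δ) ∂ν) (by
    filter_upwards [self_mem_nhdsWithin] with δ hδ using (key δ hδ).symm)
  simpa using tendsto_nhds_unique t1 t4

/-- The one-sided identity for a function with right derivative `d` at `0`, obtained by subtracting
the affine function `h 0 + d x`, whose second derivative vanishes. -/
lemma Represents.right {ε : ℝ} (hε : 0 < ε) {h : ℝ → ℝ} {ν : Measure ℝ} {d : ℝ}
    (hh : ContinuousOn h (Ioo (-ε) ε)) (hd : HasDerivWithinAt h d (Ici 0) 0)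
    (hν : Represents ε h ν) {φ : ℝ → ℝ} (hφ : IsTest ε φ) :
    -∫ x in Ioo 0 ε, h x * deriv (deriv φ) x
      = (∫ x in Ioo 0 ε, φ x ∂ν) + h 0 * deriv φ 0 - d * φ 0 := by
  set k : ℝ → ℝ := fun x => h x - (h 0 + d * x) with hk
  have hkc : ContinuousOn k (Ioo (-ε) ε) := hh.sub (by fun_prop)
  have hkd : HasDerivWithinAt k 0 (Ici 0) 0 := by
    have h1 : HasDerivAt (fun x : ℝ => h 0 + d * x) d 0 := by
      simpa using ((hasDerivAt_id (0 : ℝ)).const_mul d).const_add (h 0)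
    exact (hd.sub h1.hasDerivWithinAt).congr_deriv (sub_self d)
  have hA : ∀ {ψ}, IsTest ε ψ → Integrable fun x => (h 0 + d * x) * deriv (deriv ψ) x :=
    fun hψ => hψ.deriv.deriv.integrable_mul (by fun_prop)
  have hsplit : ∀ {ψ}, IsTest ε ψ → ∀ a ≤ ε, ∫ x in Ioo a ε, k x * deriv (deriv ψ) x
      = (∫ x in Ioo a ε, h x * deriv (deriv ψ) x) - (d * ψ a - (h 0 + d * a) * deriv ψ a) := by
    intro ψ hψ a ha
    rw [← hψ.integral_affine (h 0) d ha,
      ← integral_sub (hψ.deriv.deriv.integrable_mul hh).integrableOn (hA hψ).integrableOn]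
    simp only [hk, sub_mul]
  have hkν : Represents ε k ν := by
    intro ψ hψ
    have hb : -ε ∉ Ioo (-ε) ε := by simp
    rw [hsplit hψ (-ε) (by linarith), hψ.eq_zero hb, hψ.deriv.eq_zero hb, hν ψ hψ]
    ring
  have hcut : ∀ {ψ : ℝ → ℝ}, (∀ x ∉ Ioo (-ε) ε, ψ x = 0) → ∀ ρ : Measure ℝ,
      ∫ x in Ioi 0, ψ x ∂ρ = ∫ x in Ioo 0 ε, ψ x ∂ρ := by
    intro ψ hψ ρ
    refine (setIntegral_eq_of_subset_of_forall_sdiff_eq_zero measurableSet_Ioi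
      Ioo_subset_Ioi_self fun x hx => hψ x fun hx' => hx.2 ⟨hx.1, hx'.2⟩)
  have hfin : ∫ x in Ioo 0 ε, φ x ∂ν = -∫ x in Ioo 0 ε, k x * deriv (deriv φ) x := by
    rw [← hcut (fun x hx => hφ.eq_zero hx) ν,
      ← hcut (fun x hx => by rw [hφ.deriv.deriv.eq_zero hx, mul_zero]) volume]
    by_cases hi : IntegrableOn φ (Ioi 0) ν
    · exact hkν.right_of_flat hkc (by simp [hk]) hkd hφ hi
    · have hz := hkν.zero_of_not_integrable hkc hφ fun h' => hi h'.integrableOn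
      rw [integral_undef hi, ← hz.right_of_flat hkc (by simp [hk]) hkd hφ
        integrable_zero_measure.integrableOn]
      simp
  rw [hfin, hsplit hφ 0 hε.le]
  ring

/-! ### Linear branches -/

/-- Rescaling: `x ↦ g (s x)` is represented by `|s|` times the image of `μ` under `y ↦ y / s`. -/
lemma Represents.scale {ε s : ℝ} (hs : s ≠ 0) (hsε : |s| * ε ≤ 1) {g : ℝ → ℝ} {μ : Measure ℝ}
    (hμ : Represents 1 g μ) :
    Represents ε (fun x => g (s * x)) (ENNReal.ofReal |s| • μ.map (fun y => s⁻¹ * y)) := by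
  intro φ hφ
  have hs' : 0 < |s| := abs_pos.2 hs
  have hψ : IsTest 1 (fun y => φ (s⁻¹ * y)) := hφ.comp_mul (inv_ne_zero hs) (by
    rw [abs_inv]; exact (le_inv_mul_iff₀ hs').2 hsε)
  have hemb : MeasurableEmbedding (fun y : ℝ => s⁻¹ * y) :=
    (Homeomorph.mulLeft₀ s⁻¹ (inv_ne_zero hs)).measurableEmbedding
  have hG := Measure.integral_comp_mul_left
    (fun x => g (s * x) * (s⁻¹ ^ 2 * deriv (deriv φ) x)) s⁻¹
  simp only [mul_inv_cancel_left₀ hs, inv_inv, smul_eq_mul] at hG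
  rw [integral_smul_measure, hemb.integral_map, hμ _ hψ,
    setIntegral_eq_integral_of_forall_compl_eq_zero
      (fun x hx => by rw [hψ.deriv.deriv.eq_zero hx, mul_zero]),
    setIntegral_eq_integral_of_forall_compl_eq_zero
      (fun x hx => by rw [hφ.deriv.deriv.eq_zero hx, mul_zero])]
  simp only [hφ.deriv2_comp_mul]
  rw [hG, ENNReal.toReal_ofReal hs'.le, smul_eq_mul, mul_neg, ← mul_assoc, abs_mul_abs_self]
  have : ∀ x, g (s * x) * (s⁻¹ ^ 2 * deriv (deriv φ) x)
      = s⁻¹ ^ 2 * (g (s * x) * deriv (deriv φ) x) := fun x => by ring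
  simp only [this, integral_const_mul]
  field_simp

/-- The contribution of one linear branch `x ↦ s x`, `x > 0`; the left branch of the piecewise
linear map reduces to this one by `x ↦ -x`. -/
lemma Represents.branch {ε s : ℝ} (hε : 0 < ε) (hsε : |s| * ε ≤ 1) {g : ℝ → ℝ} {μ : Measure ℝ}
    (hg : ContinuousOn g (Ioo (-1) 1)) (hμ : Represents 1 g μ) {D : ℝ}
    (hD : HasDerivWithinAt (fun x => g (s * x)) (s * D) (Ici 0) 0)
    {φ : ℝ → ℝ} (hφ : IsTest ε φ) :
    -∫ x in Ioo 0 ε, g (s * x) * deriv (deriv φ) x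
      = |s| * (∫ y in (fun x => s * x) '' Ioo 0 ε, φ (y / s) ∂μ)
        + g 0 * deriv φ 0 - s * D * φ 0 := by
  rcases eq_or_ne s 0 with rfl | hs
  · have := hφ.integral_affine (g 0) 0 hε.le
    simp only [zero_mul, add_zero, zero_sub] at this
    simp [this]
  · have hs' : 0 < |s| := abs_pos.2 hs
    have hc : ContinuousOn (fun x => g (s * x)) (Ioo (-ε) ε) := by
      refine hg.comp (by fun_prop) fun x hx => abs_lt.1 ?_
      rw [abs_mul]
      exact (mul_lt_mul_of_pos_left (abs_lt.2 hx) hs').trans_le hsε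
    have hemb : MeasurableEmbedding (fun y : ℝ => s⁻¹ * y) :=
      (Homeomorph.mulLeft₀ s⁻¹ (inv_ne_zero hs)).measurableEmbedding
    have himg : (fun y : ℝ => s⁻¹ * y) ⁻¹' Ioo 0 ε = (fun x => s * x) '' Ioo 0 ε := by
      ext y
      constructor
      · exact fun hy => ⟨s⁻¹ * y, hy, mul_inv_cancel_left₀ hs y⟩
      · rintro ⟨x, hx, rfl⟩
        simpa [inv_mul_cancel_left₀ hs] using hx
    have := (hμ.scale hs hsε).right hε hc hD hφ
    rw [Measure.restrict_smul, integral_smul_measure, hemb.setIntegral_map, himg,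
      ENNReal.toReal_ofReal hs'.le, smul_eq_mul, mul_zero] at this
    simpa only [div_eq_inv_mul] using this

lemma hasDerivWithinAt_scale_right {g : ℝ → ℝ} {s gr : ℝ}
    (hgr : HasDerivWithinAt g gr (Ici 0) 0) (hs : 0 ≤ s) :
    HasDerivWithinAt (fun x => g (s * x)) (s * gr) (Ici 0) 0 := by
  have h1 : HasDerivWithinAt (fun x : ℝ => s * x) s (Ici 0) 0 := by
    simpa using ((hasDerivAt_id (0 : ℝ)).const_mul s).hasDerivWithinAt
  have h2 : HasDerivWithinAt g gr (Ici 0) (s * 0) := by simpa using hgr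
  exact (h2.comp 0 h1 fun x hx => mul_nonneg hs hx).congr_deriv (mul_comm _ _)

lemma hasDerivWithinAt_scale_left {g : ℝ → ℝ} {s gl : ℝ}
    (hgl : HasDerivWithinAt g gl (Iic 0) 0) (hs : s ≤ 0) :
    HasDerivWithinAt (fun x => g (s * x)) (s * gl) (Ici 0) 0 := by
  have h1 : HasDerivWithinAt (fun x : ℝ => s * x) s (Ici 0) 0 := by
    simpa using ((hasDerivAt_id (0 : ℝ)).const_mul s).hasDerivWithinAt
  have h2 : HasDerivWithinAt g gl (Iic 0) (s * 0) := by simpa using hgl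
  exact (h2.comp 0 h1 fun x hx => mul_nonpos_of_nonpos_of_nonneg hs hx).congr_deriv
    (mul_comm _ _)

/-- Piecewise affine change of variables for the second-derivative measure
of a concave function.  Let `f(x) = l·x` for `x ≤ 0` and `f(x) = r·x` for `x ≥ 0` map
`(−ε,ε)` into `(−1,1)`, let `g` be concave on `(−1,1)` with left and right derivatives
`gl = g'_l(0)`, `gr = g'_r(0)`, and let `μ` be the measure associated to `g`.  Then the
distribution `μ_{g∘f}` is the measure
`|l|·(f|_{(−ε,0)}⁻¹)_*(μ|_{f((−ε,0))}) + |r|·(f|_{(0,ε)}⁻¹)_*(μ|_{f((0,ε))}) + c_{f,g}·δ₀`,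
expressed against test functions, where `c_{f,g}` is given by the four-case formula. -/
theorem stmt_11 (ε l r : ℝ) (hε : 0 < ε) (hl : |l| * ε ≤ 1) (hr : |r| * ε ≤ 1)
    (f : ℝ → ℝ) (hf : ∀ x ≤ (0 : ℝ), f x = l * x) (hf' : ∀ x ≥ (0 : ℝ), f x = r * x)
    (g : ℝ → ℝ) (hg : ConcaveOn ℝ (Ioo (-1) 1) g)
    (gl gr : ℝ)
    (hgl : HasDerivWithinAt g gl (Iic 0) 0) (hgr : HasDerivWithinAt g gr (Ici 0) 0)
    (μ : Measure ℝ)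
    (hμ : ∀ φ : ℝ → ℝ, ContDiff ℝ (⊤ : ℕ∞) φ → HasCompactSupport φ →
      tsupport φ ⊆ Ioo (-1) 1 →
      ∫ y, φ y ∂μ = -∫ y in Ioo (-1) 1, g y * deriv (deriv φ) y) :
    let c : ℝ :=
      if 0 ≤ l ∧ 0 ≤ r then l * gl - r * gr
      else if 0 ≤ l ∧ r ≤ 0 then (l - r) * gl
      else if l ≤ 0 ∧ 0 ≤ r then (l - r) * gr
      else l * gr - r * gl
    ∀ φ : ℝ → ℝ, ContDiff ℝ (⊤ : ℕ∞) φ → HasCompactSupport φ →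
      tsupport φ ⊆ Ioo (-ε) ε →
      -∫ x in Ioo (-ε) ε, g (f x) * deriv (deriv φ) x
        = |l| * (∫ y in f '' Ioo (-ε) 0, φ (y / l) ∂μ)
          + |r| * (∫ y in f '' Ioo 0 ε, φ (y / r) ∂μ)
          + c * φ 0 := by
  intro c φ h1 h2 h3
  have hφ : IsTest ε φ := ⟨h1, h2, h3⟩
  have hrep : Represents 1 g μ := fun ψ hψ => hμ ψ hψ.smooth hψ.compact hψ.supp
  have hgc : ContinuousOn g (Ioo (-1) 1) := hg.continuousOn isOpen_Ioo
  have hfe : f = fun x => l * min x 0 + r * max x 0 := by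
    funext x
    rcases le_total x 0 with hx | hx
    · simp [hf x hx, hx]
    · simp [hf' x hx, hx]
  have hfc : Continuous f := by rw [hfe]; fun_prop
  have hmaps : MapsTo f (Ioo (-ε) ε) (Ioo (-1) 1) := by
    have key : ∀ s, |s| * ε ≤ 1 → ∀ x ∈ Ioo (-ε) ε, s * x ∈ Ioo (-1 : ℝ) 1 := by
      intro s hs x hx
      refine abs_lt.1 ?_
      rw [abs_mul]
      have hx' : |x| < ε := abs_lt.2 hx
      rcases (abs_nonneg s).eq_or_lt with h0 | h0
      · rw [← h0]; simp
      · exact (mul_lt_mul_of_pos_left hx' h0).trans_le hs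
    intro x hx
    rcases le_total x 0 with h | h
    · rw [hf x h]; exact key l hl x hx
    · rw [hf' x h]; exact key r hr x hx
  have hint : Integrable (fun x => g (f x) * deriv (deriv φ) x) :=
    hφ.deriv.deriv.integrable_mul (hgc.comp hfc.continuousOn hmaps)
  have hsplit : ∫ x in Ioo (-ε) ε, g (f x) * deriv (deriv φ) x
      = (∫ x in Ioo (-ε) 0, g (f x) * deriv (deriv φ) x)
        + ∫ x in Ioo 0 ε, g (f x) * deriv (deriv φ) x := by
    simp only [← integral_Ioc_eq_integral_Ioo]
    rw [← intervalIntegral.integral_of_le (by linarith), ← intervalIntegral.integral_of_le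
      (by linarith), ← intervalIntegral.integral_of_le hε.le]
    exact (intervalIntegral.integral_add_adjacent_intervals hint.intervalIntegrable
      hint.intervalIntegrable).symm
  have hright : ∫ x in Ioo 0 ε, g (f x) * deriv (deriv φ) x
      = ∫ x in Ioo 0 ε, g (r * x) * deriv (deriv φ) x :=
    setIntegral_congr_fun measurableSet_Ioo fun x hx => by simp only [hf' x hx.1.le]
  have hφn : IsTest ε (fun x => φ (-1 * x)) := hφ.comp_mul (by norm_num) (by simp)
  have hleft : ∫ x in Ioo (-ε) 0, g (f x) * deriv (deriv φ) x
      = ∫ x in Ioo 0 ε, g (-l * x) * deriv (deriv fun x => φ (-1 * x)) x := by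
    have e : ∫ x in Ioo 0 ε, g (-l * x) * deriv (deriv fun x => φ (-1 * x)) x
        = ∫ x in Ioo 0 ε, g (f (-x)) * deriv (deriv φ) (-x) :=
      setIntegral_congr_fun measurableSet_Ioo fun x hx => by
        simp only [hφ.deriv2_comp_mul, hf (-x) (by linarith [hx.1])]
        norm_num
    rw [e, ← integral_Ioc_eq_integral_Ioo, ← integral_Ioc_eq_integral_Ioo,
      ← intervalIntegral.integral_of_le (by linarith), ← intervalIntegral.integral_of_le hε.le,
      intervalIntegral.integral_comp_neg (fun x => g (f x) * deriv (deriv φ) x), neg_zero]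
  have himr : f '' Ioo 0 ε = (fun x => r * x) '' Ioo 0 ε :=
    image_congr fun x hx => hf' x hx.1.le
  have himl : f '' Ioo (-ε) 0 = (fun x => -l * x) '' Ioo 0 ε := by
    ext y
    constructor
    · rintro ⟨x, hx, rfl⟩
      exact ⟨-x, ⟨by linarith [hx.2], by linarith [hx.1]⟩, by simp [hf x hx.2.le]⟩
    · rintro ⟨x, hx, rfl⟩
      exact ⟨-x, ⟨by linarith [hx.2], by linarith [hx.1]⟩, by
        simp [hf (-x) (by linarith [hx.1])]⟩
  have hdn : deriv (fun x => φ (-1 * x)) 0 = -deriv φ 0 := by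
    have h4 : HasDerivAt φ (deriv φ 0) (-1 * 0) := by simpa using hφ.hasDerivAt 0
    have := (h4.comp 0 ((hasDerivAt_id (0 : ℝ)).const_mul (-1))).deriv
    simpa [Function.comp_def] using this
  -- `Dl`, `Dr` are the one-sided slopes of `g` at `0` seen along the left and right branches
  obtain ⟨Dl, hDl, hDl1, hDl2⟩ : ∃ D, HasDerivWithinAt (fun x => g (-l * x)) (-l * D) (Ici 0) 0
      ∧ (0 ≤ l → l * D = l * gl) ∧ (l ≤ 0 → l * D = l * gr) := by
    rcases le_total 0 l with h | h
    · refine ⟨gl, hasDerivWithinAt_scale_left hgl (by linarith), fun _ => rfl, fun h' => ?_⟩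
      simp [le_antisymm h' h]
    · refine ⟨gr, hasDerivWithinAt_scale_right hgr (by linarith), fun h' => ?_, fun _ => rfl⟩
      simp [le_antisymm h h']
  obtain ⟨Dr, hDr, hDr1, hDr2⟩ : ∃ D, HasDerivWithinAt (fun x => g (r * x)) (r * D) (Ici 0) 0
      ∧ (0 ≤ r → r * D = r * gr) ∧ (r ≤ 0 → r * D = r * gl) := by
    rcases le_total 0 r with h | h
    · refine ⟨gr, hasDerivWithinAt_scale_right hgr h, fun _ => rfl, fun h' => ?_⟩
      simp [le_antisymm h' h]
    · refine ⟨gl, hasDerivWithinAt_scale_left hgl h, fun h' => ?_, fun _ => rfl⟩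
      simp [le_antisymm h h']
  have hc : c = l * Dl - r * Dr := by
    simp only [c]
    split_ifs with ha hb hd
    · rw [hDl1 ha.1, hDr1 ha.2]
    · rw [hDl1 hb.1, hDr2 hb.2]; ring
    · rw [hDl2 hd.1, hDr1 hd.2]; ring
    · rcases le_total 0 l with h | h <;> rcases le_total 0 r with h' | h'
      · exact absurd ⟨h, h'⟩ ha
      · exact absurd ⟨h, h'⟩ hb
      · exact absurd ⟨h, h'⟩ hd
      · rw [hDl2 h, hDr2 h']
  have bl := hrep.branch hε (s := -l) (by simpa using hl) hgc hDl hφn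
  have br := hrep.branch hε hr hgc hDr hφ
  have harg : ∀ y : ℝ, -1 * (y / -l) = y / l := fun y => by rw [div_neg]; ring
  simp only [harg, hdn, abs_neg, mul_zero] at bl
  rw [hsplit, hright, hleft, himl, himr, hc, neg_add, bl, br]
  ring
end

section
/- If there exists a nondegenerate interval [u,v] with u < v on which f = f₁ − f₀ is affine with slope n, or affine with slope −n (the maximal possible absolute value of the slope), then f is monotone on all of ℝ (not necessarily strictly monotone). -/
/-!
Each `f_i` is a minimum of affine functions with slopes in `[0, n]`, hence concave,
nondecreasing and of growth at most `n`. If `f₁ - f₀` has slope `n` on `[u, v]`, then there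
`f₁` must have slope `n` and `f₀` slope `0`. By concavity `f₁` has slope at least `n` on all of
`(-∞, v]`, so `f₁ - f₀` is nondecreasing there because `f₀` grows at rate at most `n`; and `f₀`
is constant on `[u, ∞)`, so `f₁ - f₀` is nondecreasing there because `f₁` is. The two
half-lines cover `ℝ`. Slope `-n` is the same situation with `f₀` and `f₁` exchanged.
`monotone_sub_of_extremal_slope` is this argument for general concave functions.
-/

theorem concaveOn_inf'_affine (s : Finset ℕ) (hs : s.Nonempty) (b : ℕ → ℕ) (c : ℕ → ℝ) :
    ConcaveOn ℝ Set.univ (fun x : ℝ => s.inf' hs fun j => (b j : ℝ) * x + c j) := by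
  refine ⟨convex_univ, fun x _ y _ p q hp hq hpq => ?_⟩
  refine Finset.le_inf' _ _ fun j hj => ?_
  have hx := Finset.inf'_le (fun j => (b j : ℝ) * x + c j) hj
  have hy := Finset.inf'_le (fun j => (b j : ℝ) * y + c j) hj
  have hx' := mul_le_mul_of_nonneg_left hx hp
  have hy' := mul_le_mul_of_nonneg_left hy hq
  have hc : c j = p * c j + q * c j := by rw [← add_mul, hpq, one_mul]
  simp only [smul_eq_mul]
  linarith

theorem monotone_inf'_affine (s : Finset ℕ) (hs : s.Nonempty) (b : ℕ → ℕ) (c : ℕ → ℝ) :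
    Monotone (fun x : ℝ => s.inf' hs fun j => (b j : ℝ) * x + c j) := by
  intro x y hxy
  refine Finset.le_inf' _ _ fun j hj => ?_
  have hx := Finset.inf'_le (fun j => (b j : ℝ) * x + c j) hj
  have := mul_le_mul_of_nonneg_left hxy (Nat.cast_nonneg (α := ℝ) (b j))
  linarith

theorem inf'_affine_growth (n : ℕ) (s : Finset ℕ) (hs : s.Nonempty) (b : ℕ → ℕ) (c : ℕ → ℝ)
    (hb : ∀ j ∈ s, b j ≤ n) (x y : ℝ) (hxy : x ≤ y) :
    (s.inf' hs fun j => (b j : ℝ) * y + c j) - (s.inf' hs fun j => (b j : ℝ) * x + c j)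
      ≤ n * (y - x) := by
  -- The index attaining the minimum at `x` bounds the minimum at `y`.
  obtain ⟨j, hj, hjx⟩ := s.exists_mem_eq_inf' hs fun j => (b j : ℝ) * x + c j
  have hy := Finset.inf'_le (fun j => (b j : ℝ) * y + c j) hj
  have hbn : (b j : ℝ) ≤ n := by exact_mod_cast hb j hj
  have := mul_le_mul_of_nonneg_right hbn (sub_nonneg.2 hxy)
  rw [hjx]
  linarith

/-- If concave nondecreasing functions `g`, `h` of growth at most `N` have a difference `g - h`
that attains the maximal growth `N * (v - u)` between some `u < v`, then `g - h` is
nondecreasing: `g` has slope at least `N` left of `v`, and `h` is constant right of `u`. -/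
theorem monotone_sub_of_extremal_slope (N : ℝ) (g h : ℝ → ℝ)
    (hg : ConcaveOn ℝ Set.univ g) (hh : ConcaveOn ℝ Set.univ h)
    (gm : Monotone g) (hm : Monotone h)
    (gN : ∀ x y, x ≤ y → g y - g x ≤ N * (y - x))
    (hN : ∀ x y, x ≤ y → h y - h x ≤ N * (y - x))
    (u v : ℝ) (huv : u < v) (huv' : (g v - h v) - (g u - h u) = N * (v - u)) :
    Monotone fun x => g x - h x := by
  have g_uv : g v - g u = N * (v - u) := by
    linarith [gN u v huv.le, hm huv.le]
  have h_uv : h v = h u := by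
    linarith [gN u v huv.le, hm huv.le]
  have g_left : ∀ x ≤ v, N * (v - x) ≤ g v - g x := by
    intro x hx
    rcases lt_or_ge x u with hxu | hxu
    · have hs := hg.slope_anti_adjacent (Set.mem_univ x) (Set.mem_univ v) hxu huv
      rw [g_uv, mul_div_cancel_right₀ _ (sub_pos.2 huv).ne', le_div_iff₀ (sub_pos.2 hxu)] at hs
      linarith
    · linarith [gN u x hxu]
  have h_right : ∀ y, v ≤ y → h y ≤ h v := by
    intro y hy
    rcases hy.eq_or_lt with rfl | hvy
    · exact le_rfl
    · have hs := hh.slope_anti_adjacent (Set.mem_univ u) (Set.mem_univ y) huv hvy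
      rw [h_uv, sub_self, zero_div, div_le_iff₀ (sub_pos.2 hvy)] at hs
      linarith
  intro x y hxy
  show g x - h x ≤ g y - h y
  rcases le_total y v with hyv | hvy
  · linarith [g_left x (hxy.trans hyv), gN y v hyv, hN x y hxy]
  · rcases le_total x v with hxv | hvx
    · linarith [g_left x hxv, hN x v hxv, gm hvy, h_right y hvy]
    · linarith [gm hxy, h_right y hvy, hm hvx]

/-- For `f = f₁ − f₀`, where `f_i(x) = min_j (b_iʲ·x + c_iʲ)` over nonempty
finite families with natural slopes `0 ≤ b_iʲ ≤ n`, and with the normalization that the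
slope `n` occurs and the slope `0` occurs among the `b_iʲ`: if `f` is affine of slope `n`
or `−n` (the maximal possible absolute value) on some nondegenerate interval `[u,v]`,
then `f` is monotone on all of `ℝ` (not necessarily strictly). -/
theorem stmt_14 (n : ℕ) (hn : 2 ≤ n)
    (s : Fin 2 → Finset ℕ) (hs : ∀ i, (s i).Nonempty)
    (b : Fin 2 → ℕ → ℕ) (cc : Fin 2 → ℕ → ℝ)
    (hb : ∀ i, ∀ j ∈ s i, b i j ≤ n)
    (hocc_n : ∃ i, ∃ j ∈ s i, b i j = n)
    (hocc_0 : ∃ i, ∃ j ∈ s i, b i j = 0) :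
    let fc : Fin 2 → ℝ → ℝ := fun i x =>
      (s i).inf' (hs i) fun j => (b i j : ℝ) * x + cc i j
    let f : ℝ → ℝ := fun x => fc 1 x - fc 0 x
    (∃ u v : ℝ, u < v ∧
        ((∃ d : ℝ, ∀ x ∈ Set.Icc u v, f x = n * x + d) ∨
         (∃ d : ℝ, ∀ x ∈ Set.Icc u v, f x = -(n : ℝ) * x + d))) →
    (Monotone f ∨ Antitone f) := by
  intro fc f
  rintro ⟨u, v, huv, ⟨d, hd⟩ | ⟨d, hd⟩⟩
  all_goals
    have hu := hd u (Set.left_mem_Icc.2 huv.le)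
    have hv := hd v (Set.right_mem_Icc.2 huv.le)
    have hconc : ∀ i, ConcaveOn ℝ Set.univ (fc i) := fun i =>
      concaveOn_inf'_affine (s i) (hs i) (b i) (cc i)
    have hmono : ∀ i, Monotone (fc i) := fun i =>
      monotone_inf'_affine (s i) (hs i) (b i) (cc i)
    have hgrow : ∀ i x y, x ≤ y → fc i y - fc i x ≤ n * (y - x) := fun i =>
      inf'_affine_growth n (s i) (hs i) (b i) (cc i) (hb i)
    change fc 1 u - fc 0 u = _ at hu
    change fc 1 v - fc 0 v = _ at hv
  · exact Or.inl (monotone_sub_of_extremal_slope n (fc 1) (fc 0) (hconc 1) (hconc 0)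
      (hmono 1) (hmono 0) (hgrow 1) (hgrow 0) u v huv (by linarith))
  · have key := monotone_sub_of_extremal_slope n (fc 0) (fc 1) (hconc 0) (hconc 1)
      (hmono 0) (hmono 1) (hgrow 0) (hgrow 1) u v huv (by linarith)
    refine Or.inr fun x y hxy => ?_
    have hk : fc 0 x - fc 1 x ≤ fc 0 y - fc 1 y := key hxy
    show fc 1 y - fc 0 y ≤ fc 1 x - fc 0 x
    linarith
end

section
/- The function g is concave and satisfies the functional equation g(f(x)) = 4·g(x) − c(x) for every x ∈ ℝ; hence g is the unique normalized potential of the tent map. -/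
/-!
Concavity: `g` is the lower envelope of its tangent lines at the points `m ∈ [-1/2, 1/2]`,
`g(x) = min_{|m| ≤ 1/2} (m²/2 - m x + 1/24)`, the minimum being attained at the projection of `x`
to `[-1/2, 1/2]`. An infimum of affine functions is concave.

Functional equation: `f` maps `|x| ≤ 1/2` into itself and `|x| > 1/2` to `f(x) < -1/2`, so
both sides are given by the same branch of `g`, where the equation is a polynomial identity
in `|x|`.
-/

/-- The potential of the tent map. -/
noncomputable def tentPotential (x : ℝ) : ℝ :=
  if |x| ≤ 1 / 2 then -x ^ 2 / 2 + 1 / 24 else -|x| / 2 + 1 / 6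

lemma tentPotential_le_tangent (x m : ℝ) (hm : |m| ≤ 1 / 2) :
    tentPotential x ≤ m ^ 2 / 2 - m * x + 1 / 24 := by
  unfold tentPotential
  split_ifs with h
  · nlinarith [sq_nonneg (x - m)]
  · -- The difference is at least `(|x| - |m|)²/2 - (|x| - 1/2)²/2`, and `|x| - |m| ≥ |x| - 1/2 > 0`.
    have h1 : m * x ≤ |m| * |x| := by rw [← abs_mul]; exact le_abs_self _
    nlinarith [sq_abs m, mul_nonneg (sub_nonneg.2 hm) (sub_nonneg.2 (not_le.1 h).le),
      sq_nonneg (|m| - 1 / 2)]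

lemma exists_tangent_eq_tentPotential (x : ℝ) :
    ∃ m : ℝ, |m| ≤ 1 / 2 ∧ tentPotential x = m ^ 2 / 2 - m * x + 1 / 24 := by
  unfold tentPotential
  split_ifs with h
  · exact ⟨x, h, by ring⟩
  · rcases abs_cases x with ⟨hx, _⟩ | ⟨hx, _⟩
    · exact ⟨1 / 2, by norm_num, by rw [hx]; ring⟩
    · exact ⟨-(1 / 2), by norm_num, by rw [hx]; ring⟩

lemma concaveOn_tentPotential : ConcaveOn ℝ Set.univ tentPotential := by
  refine ⟨convex_univ, fun x _ y _ a b ha hb hab => ?_⟩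
  simp only [smul_eq_mul]
  obtain ⟨m, hm, h⟩ := exists_tangent_eq_tentPotential (a * x + b * y)
  rw [h]
  have hx := mul_le_mul_of_nonneg_left (tentPotential_le_tangent x m hm) ha
  have hy := mul_le_mul_of_nonneg_left (tentPotential_le_tangent y m hm) hb
  obtain rfl : b = 1 - a := by linarith
  linarith

lemma tentPotential_tent (x : ℝ) :
    tentPotential (-2 * |x| + 1 / 2) = 4 * tentPotential x - (-|x| + 1 / 4) := by
  have h0 := abs_nonneg x
  unfold tentPotential
  by_cases h : |x| ≤ 1 / 2
  · have hf : |-2 * |x| + 1 / 2| ≤ 1 / 2 := abs_le.2 ⟨by linarith, by linarith⟩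
    rw [if_pos h, if_pos hf]
    linear_combination (-2) * sq_abs x
  · have hf : |-2 * |x| + 1 / 2| = 2 * |x| - 1 / 2 := by
      rw [abs_of_nonpos (by linarith)]; ring
    rw [if_neg h, hf, if_neg (by linarith)]
    ring

/-- The potential `g` of the tent map `f(x) = −2|x| + 1/2`, defined by
`g(x) = −x²/2 + 1/24` for `|x| ≤ 1/2` and `g(x) = −|x|/2 + 1/6` for `|x| ≥ 1/2`, is
concave and satisfies the functional equation `g(f(x)) = 4·g(x) − c(x)` with the cocycle
`c(x) = −|x| + 1/4`. -/
theorem stmt_16 :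
    let f : ℝ → ℝ := fun x => -2 * |x| + 1 / 2
    let c : ℝ → ℝ := fun x => -|x| + 1 / 4
    let g : ℝ → ℝ := fun x =>
      if |x| ≤ 1 / 2 then -x ^ 2 / 2 + 1 / 24 else -|x| / 2 + 1 / 6
    ConcaveOn ℝ Set.univ g ∧ ∀ x : ℝ, g (f x) = 4 * g x - c x := by
  exact ⟨concaveOn_tentPotential, tentPotential_tent⟩
end
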